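/- Let A ⊆ ℝ^m be a set with 0 < |A| < +∞ (Lebesgue measure). If there is a net of smooth sets U_α ⊂⊂ A such that χ_{U_α} → χ_A in L_1(ℝ^m) and sup_α P(U_α) < +∞, then H^{m-1}(∂A \ ext_* A) < +∞. -/

import Mathlib

/-- A directed, nonempty index type, used to formalize nets. -/
structure DirIdx where
  ι : Type
  [pre : Preorder ι]
  [ne : Nonempty ι]
  [dir : IsDirected ι fun a b => a ≤ b]

attribute [instance] DirIdx.pre DirIdx.ne DirIdx.dir

open MeasureTheory Filter Topology Metric Set
open scoped ENNReal RealInnerProductSpace symmDiff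

noncomputable section

abbrev Euc (m : ℕ) := EuclideanSpace ℝ (Fin m)

/-- Pointwise divergence of a vector field on `ℝ^m`. -/
def pdiv {m : ℕ} (φ : Euc m → Euc m) (x : Euc m) : ℝ :=
  ∑ i, ⟪fderiv ℝ φ x (EuclideanSpace.single i 1), EuclideanSpace.single i (1 : ℝ)⟫

/-- The measure-theoretic exterior of `A`: points of Lebesgue density zero. -/
def extMeas {m : ℕ} (A : Set (Euc m)) : Set (Euc m) :=
  {x | Tendsto (fun r : ℝ => volume (A ∩ closedBall x r) / volume (closedBall x r))
      (𝓝[>] (0 : ℝ)) (𝓝 0)}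

/-- The perimeter `P(V; W)` of `V` relative to the open set `W` (valued in `ℝ≥0∞`). -/
def perimeter {m : ℕ} (V W : Set (Euc m)) : ℝ≥0∞ :=
  ⨆ (φ : Euc m → Euc m) (_ : ContDiff ℝ 1 φ) (_ : HasCompactSupport φ)
    (_ : tsupport φ ⊆ W) (_ : ∀ x, ‖φ x‖ ≤ 1),
    ENNReal.ofReal (∫ x in V, pdiv φ x)

/-- A smooth set: a bounded open set with `C^∞` boundary. -/
def IsSmoothSet {m : ℕ} (V : Set (Euc m)) : Prop :=
  IsOpen V ∧ Bornology.IsBounded V ∧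
  ∀ x ∈ frontier V, ∃ (W : Set (Euc m)) (f : Euc m → ℝ), IsOpen W ∧ x ∈ W ∧
    ContDiff ℝ (⊤ : ℕ∞) f ∧ (∀ y ∈ W, fderiv ℝ f y ≠ 0) ∧ V ∩ W = {y | f y < 0} ∩ W

/-- Admissible functions: `C^1`, compactly supported, with values in `[0,1]`. -/
structure Adm {m : ℕ} (u : Euc m → ℝ) : Prop where
  cd : ContDiff ℝ 1 u
  cs : HasCompactSupport u
  nonneg : ∀ x, 0 ≤ u x
  le_one : ∀ x, u x ≤ 1

/-- total variation of a `C^1` function -/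
def TV {m : ℕ} (u : Euc m → ℝ) : ℝ := ∫ x, ‖fderiv ℝ u x‖

/-- `L^1` distance to an indicator -/
def L1d {m : ℕ} (u : Euc m → ℝ) (W : Set (Euc m)) : ℝ := ∫ x, |u x - W.indicator 1 x|

/-- `W` is approximable by admissible functions of total variation at most `P`. -/
def Approx {m : ℕ} (W : Set (Euc m)) (P : ℝ) : Prop :=
  ∀ η > 0, ∃ u, Adm u ∧ L1d u W ≤ η ∧ TV u ≤ P

/-- volume of the unit ball -/
def vb (m : ℕ) : ℝ := volume.real (closedBall (0 : Euc m) 1)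

/-- density of `W` in a closed ball -/
def dens {m : ℕ} (W : Set (Euc m)) (x : Euc m) (r : ℝ) : ℝ :=
  volume.real (W ∩ closedBall x r) / (vb m * r ^ m)

lemma vb_pos (m : ℕ) : 0 < vb m := by
  unfold vb
  rw [measureReal_def, ENNReal.toReal_pos_iff]
  exact ⟨measure_closedBall_pos _ _ one_pos, measure_closedBall_lt_top⟩

lemma vol_ball {m : ℕ} (x : Euc m) {r : ℝ} (hr : 0 ≤ r) :
    volume.real (closedBall x r) = vb m * r ^ m := by
  unfold vb
  rw [measureReal_def, Measure.addHaar_closedBall' _ _ hr]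
  simp [measureReal_def, ENNReal.toReal_mul, mul_comm, ENNReal.toReal_ofReal (pow_nonneg hr m)]

lemma Adm.int {m : ℕ} {u : Euc m → ℝ} (h : Adm u) : Integrable u :=
  h.cd.continuous.integrable_of_hasCompactSupport h.cs

lemma Adm.cont_fderiv {m : ℕ} {u : Euc m → ℝ} (h : Adm u) : Continuous (fderiv ℝ u) :=
  h.cd.continuous_fderiv one_ne_zero

lemma Adm.int_fderiv {m : ℕ} {u : Euc m → ℝ} (h : Adm u) : Integrable (fun x => ‖fderiv ℝ u x‖) :=
  (h.cont_fderiv.integrable_of_hasCompactSupport (h.cs.fderiv ℝ)).norm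

lemma int_ind {m : ℕ} {W : Set (Euc m)} (hW : MeasurableSet W) (hf : volume W ≠ ⊤) :
    Integrable (W.indicator (1 : Euc m → ℝ)) :=
  (integrable_indicator_iff hW).2 (integrableOn_const hf)

lemma Adm.int_diff {m : ℕ} {u : Euc m → ℝ} (h : Adm u) {W : Set (Euc m)} (hW : MeasurableSet W)
    (hf : volume W ≠ ⊤) : Integrable (fun x => |u x - W.indicator 1 x|) :=
  (h.int.sub (int_ind hW hf)).abs

lemma sum_setInt_le {m : ℕ} {g : Euc m → ℝ} (hg : Integrable g) (h0 : ∀ x, 0 ≤ g x)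
    (F : Finset (Euc m)) (r : Euc m → ℝ)
    (hd : (F : Set (Euc m)).PairwiseDisjoint fun x => closedBall x (r x)) :
    ∑ x ∈ F, ∫ y in closedBall x (r x), g y ≤ ∫ y, g y := by
  rw [← integral_biUnion_finset F (fun x _ => measurableSet_closedBall) hd
    (fun x _ => hg.integrableOn)]
  exact setIntegral_le_integral hg (Eventually.of_forall h0)

/-- covering lemma -/
lemma cov {m : ℕ} (hm : 0 < m) (S : Set (Euc m)) (M : ℝ) (δ₀ : ℝ) (hδ₀ : 0 < δ₀)
    (H : ∀ δ, 0 < δ → δ ≤ δ₀ → ∃ r : Euc m → ℝ, (∀ x ∈ S, 0 < r x ∧ r x ≤ δ) ∧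
      ∀ F : Finset (Euc m), (F : Set (Euc m)) ⊆ S →
        ((F : Set (Euc m)).PairwiseDisjoint fun x => closedBall x (r x)) →
        ∑ x ∈ F, r x ^ (m - 1) ≤ M) :
    (μH[(m : ℝ) - 1] : Measure (Euc m)) S ≤ ENNReal.ofReal (8 ^ (m - 1) * M) := by
  have hd : (m : ℝ) - 1 = ((m - 1 : ℕ) : ℝ) := by
    rw [Nat.cast_sub hm]; simp
  have key : ∀ n : ℕ, ∃ (u : Set (Euc m)) (r : Euc m → ℝ), u.Countable ∧
      (∀ x ∈ u, 0 < r x ∧ r x ≤ δ₀ / (n + 1)) ∧ (S ⊆ ⋃ x : u, closedBall x.1 (4 * r x)) ∧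
      ∑' x : u, (ediam (closedBall x.1 (4 * r x))) ^ ((m : ℝ) - 1)
        ≤ ENNReal.ofReal (8 ^ (m - 1) * M) := by
    intro n
    have hn : 0 < δ₀ / (n + 1) := by positivity
    have hn' : δ₀ / (n + 1) ≤ δ₀ := div_le_self hδ₀.le (by norm_cast; omega)
    obtain ⟨r, hr, hF⟩ := H _ hn hn'
    obtain ⟨u, huS, hdis, hcov⟩ :=
      Vitali.exists_disjoint_subfamily_covering_enlargement_closedBall S (fun x => x) r _
        (fun x hx => (hr x hx).2) 4 (by norm_num)
    refine ⟨u, r, ?_, fun x hx => hr x (huS hx), ?_, ?_⟩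
    · refine hdis.countable_of_nonempty_interior (fun x hx => ?_)
      exact ⟨x, ball_subset_interior_closedBall (mem_ball_self (hr x (huS hx)).1)⟩
    · intro x hx
      obtain ⟨b, hb, hsub⟩ := hcov x hx
      exact mem_iUnion.2 ⟨⟨b, hb⟩, hsub (mem_closedBall_self (hr x hx).1.le)⟩
    · rw [hd, ENNReal.tsum_eq_iSup_sum]
      refine iSup_le fun F => ?_
      calc ∑ x ∈ F, (ediam (closedBall x.1 (4 * r x))) ^ (((m - 1 : ℕ) : ℝ))
          ≤ ∑ x ∈ F, ENNReal.ofReal (8 ^ (m - 1) * r x ^ (m - 1)) := by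
            refine Finset.sum_le_sum fun x _ => ?_
            rw [ENNReal.rpow_natCast, ← mul_pow, ENNReal.ofReal_pow
              (by have := (hr x (huS x.2)).1; positivity)]
            gcongr
            refine ediam_le_of_forall_dist_le fun y hy z hz => ?_
            have h1 := dist_triangle_right y z x.1
            rw [mem_closedBall] at hy hz
            linarith
        _ = ENNReal.ofReal (∑ x ∈ F, 8 ^ (m - 1) * r x ^ (m - 1)) := by
            rw [ENNReal.ofReal_sum_of_nonneg]
            intro x _
            have := (hr x (huS x.2)).1; positivity
        _ ≤ _ := by
            apply ENNReal.ofReal_le_ofReal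
            rw [← Finset.mul_sum]
            have h := hF (F.map (Function.Embedding.subtype _)) (by
              intro x hx; simp at hx; exact huS hx.1) (by
              refine hdis.subset ?_
              intro x hx; simp at hx; exact hx.1)
            rw [Finset.sum_map] at h
            simp only [Function.Embedding.subtype_apply] at h
            gcongr
  choose u r hc hr hS hsum using key
  have : ∀ n, Countable (u n) := fun n => (hc n).to_subtype
  refine (Measure.hausdorffMeasure_le_liminf_tsum (l := atTop) ((m : ℝ) - 1) S
    (fun n : ℕ => ENNReal.ofReal (8 * (δ₀ / (n + 1)))) ?_
    (fun n (x : u n) => closedBall x.1 (4 * r n x)) ?_ (Eventually.of_forall hS)).trans ?_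
  · rw [← ENNReal.ofReal_zero]
    refine ENNReal.tendsto_ofReal ?_
    have := (tendsto_const_div_atTop_nhds_zero_nat δ₀).comp (tendsto_add_atTop_nat 1)
    have := this.const_mul 8
    simpa using this
  · refine Eventually.of_forall fun n x => ?_
    refine ediam_le_of_forall_dist_le fun y hy z hz => ?_
    have h1 := dist_triangle_right y z x.1
    have := (hr n x x.2).2
    rw [mem_closedBall] at hy hz
    linarith
  · refine (liminf_le_liminf (Eventually.of_forall hsum)).trans ?_
    simp

lemma lint_smul {m : ℕ} (G : Euc m → ℝ≥0∞) (hG : Measurable G) (c : ℝ) (hc : 1 / 2 ≤ c)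
    (v : Euc m) : ∫⁻ x, G (c • x + v) ≤ ENNReal.ofReal (2 ^ m) * ∫⁻ x, G x := by
  have hc0 : c ≠ 0 := by intro h; rw [h] at hc; norm_num at hc
  have h1 : ∫⁻ x, G (c • x + v) = ∫⁻ x, G (x + v) ∂(Measure.map (fun x : Euc m => c • x) volume) := by
    rw [lintegral_map (f := fun x => G (x + v)) (by fun_prop) (measurable_const_smul c)]
  rw [h1, Measure.map_addHaar_smul _ hc0, lintegral_smul_measure, lintegral_add_right_eq_self]
  simp only [smul_eq_mul]
  gcongr
  have hcp : 0 < c := by linarith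
  rw [abs_of_nonneg (by positivity)]
  simp only [finrank_euclideanSpace, Fintype.card_fin]
  rw [← inv_pow]
  gcongr
  rw [inv_le_comm₀ hcp two_pos]; linarith

lemma poinc_half {m : ℕ} {u : Euc m → ℝ} (hu : ContDiff ℝ 1 u) (x₀ : Euc m) {r : ℝ} (hr : 0 ≤ r) :
    ∫⁻ a in closedBall x₀ r, ∫⁻ b in closedBall x₀ r, ‖u b - u ((1/2 : ℝ) • b + (1/2 : ℝ) • a)‖ₑ
      ≤ volume (closedBall x₀ r) * ENNReal.ofReal (r * 2 ^ m) *
        ∫⁻ x in closedBall x₀ r, ‖fderiv ℝ u x‖ₑ := by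
  set B := closedBall x₀ r with hB
  have hcf : Continuous (fderiv ℝ u) := hu.continuous_fderiv one_ne_zero
  set J := ∫⁻ x in B, ‖fderiv ℝ u x‖ₑ with hJ
  have inner : ∀ a ∈ B, ∫⁻ b in B, ‖u b - u ((1/2 : ℝ) • b + (1/2 : ℝ) • a)‖ₑ
      ≤ ENNReal.ofReal (r * 2 ^ m) * J := by
    intro a ha
    have step1 : ∀ b ∈ B, ‖u b - u ((1/2 : ℝ) • b + (1/2 : ℝ) • a)‖ₑ ≤
        ENNReal.ofReal (2 * r) * ∫⁻ t in Ioc (0:ℝ) (1/2), ‖fderiv ℝ u ((1 - t) • b + t • a)‖ₑ := by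
      intro b hb
      have hder : ∀ t : ℝ, HasDerivAt (fun t : ℝ => u ((1 - t) • b + t • a))
          (fderiv ℝ u ((1 - t) • b + t • a) (a - b)) t := by
        intro t
        have h1 : HasDerivAt (fun t : ℝ => (1 - t) • b + t • a) (a - b) t := by
          have := (((hasDerivAt_id t).const_sub 1).smul_const b).add
            ((hasDerivAt_id t).smul_const a)
          convert! this using 1
          simp [sub_eq_add_neg, add_comm]
        exact ((hu.differentiable one_ne_zero _).hasFDerivAt).comp_hasDerivAt t h1
      have hcont : Continuous (fun t : ℝ => fderiv ℝ u ((1 - t) • b + t • a) (a - b)) := by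
        fun_prop
      have hftc := intervalIntegral.integral_eq_sub_of_hasDerivAt (a := 0) (b := 1/2)
        (fun t _ => hder t) (hcont.intervalIntegrable _ _)
      rw [intervalIntegral.integral_of_le (by norm_num)] at hftc
      have e1 : u b - u ((1/2 : ℝ) • b + (1/2 : ℝ) • a) =
          -∫ t in Ioc (0:ℝ) (1/2), fderiv ℝ u ((1 - t) • b + t • a) (a - b) := by
        rw [hftc]; norm_num
      rw [e1, enorm_neg]
      refine (enorm_integral_le_lintegral_enorm _).trans ?_
      rw [← lintegral_const_mul' _ _ ENNReal.ofReal_ne_top]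
      refine lintegral_mono fun t => ?_
      refine (ContinuousLinearMap.le_opENorm _ _).trans ?_
      rw [mul_comm]
      gcongr
      rw [← ofReal_norm, ← dist_eq_norm]
      apply ENNReal.ofReal_le_ofReal
      have := dist_triangle_right a b x₀
      rw [hB, mem_closedBall] at ha hb
      linarith
    calc ∫⁻ b in B, ‖u b - u ((1/2 : ℝ) • b + (1/2 : ℝ) • a)‖ₑ
        ≤ ∫⁻ b in B, ENNReal.ofReal (2 * r) *
            ∫⁻ t in Ioc (0:ℝ) (1/2), ‖fderiv ℝ u ((1 - t) • b + t • a)‖ₑ :=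
          setLIntegral_mono' measurableSet_closedBall step1
      _ = ENNReal.ofReal (2 * r) * ∫⁻ b in B,
            ∫⁻ t in Ioc (0:ℝ) (1/2), ‖fderiv ℝ u ((1 - t) • b + t • a)‖ₑ :=
          lintegral_const_mul' _ _ ENNReal.ofReal_ne_top
      _ = ENNReal.ofReal (2 * r) * ∫⁻ t in Ioc (0:ℝ) (1/2),
            ∫⁻ b in B, ‖fderiv ℝ u ((1 - t) • b + t • a)‖ₑ := by
          rw [lintegral_lintegral_swap]
          have : Continuous (fun p : Euc m × ℝ => fderiv ℝ u ((1 - p.2) • p.1 + p.2 • a)) := by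
            fun_prop
          exact this.enorm.measurable.aemeasurable
      _ ≤ ENNReal.ofReal (2 * r) * ∫⁻ t in Ioc (0:ℝ) (1/2), ENNReal.ofReal (2 ^ m) * J := by
          gcongr ENNReal.ofReal (2 * r) * ?_
          refine setLIntegral_mono' measurableSet_Ioc fun t ht => ?_
          have h2 := lint_smul (B.indicator fun x => ‖fderiv ℝ u x‖ₑ)
            (hcf.enorm.measurable.indicator measurableSet_closedBall) (1 - t)
            (by linarith [ht.2]) (t • a)
          rw [lintegral_indicator measurableSet_closedBall] at h2
          refine le_trans ?_ h2
          rw [← lintegral_indicator measurableSet_closedBall]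
          refine lintegral_mono fun b => ?_
          by_cases hb : b ∈ B
          · have : (1 - t) • b + t • a ∈ B :=
              convex_closedBall x₀ r hb ha (by linarith [ht.2]) ht.1.le (by ring)
            rw [indicator_of_mem hb, indicator_of_mem this]
          · rw [indicator_of_notMem hb]; exact zero_le
      _ = ENNReal.ofReal (r * 2 ^ m) * J := by
          rw [setLIntegral_const, Real.volume_Ioc, mul_comm (ENNReal.ofReal (2 ^ m) * J), ← mul_assoc,
            ← mul_assoc, ← ENNReal.ofReal_mul (by positivity), ← ENNReal.ofReal_mul (by positivity)]
          congr 2; ring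
  calc _ ≤ ∫⁻ a in B, ENNReal.ofReal (r * 2 ^ m) * J :=
        setLIntegral_mono' measurableSet_closedBall inner
    _ = _ := by rw [setLIntegral_const]; ring

lemma poinc {m : ℕ} {u : Euc m → ℝ} (hu : ContDiff ℝ 1 u) (x₀ : Euc m) {r : ℝ} (hr : 0 ≤ r) :
    ∫⁻ a in closedBall x₀ r, ∫⁻ b in closedBall x₀ r, ‖u b - u a‖ₑ
      ≤ 2 * (volume (closedBall x₀ r) * ENNReal.ofReal (r * 2 ^ m) *
        ∫⁻ x in closedBall x₀ r, ‖fderiv ℝ u x‖ₑ) := by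
  have hk := poinc_half hu x₀ hr
  have hc := hu.continuous
  have hc1 : Continuous (fun p : Euc m × Euc m => ‖u p.2 - u ((1/2 : ℝ) • p.2 + (1/2 : ℝ) • p.1)‖ₑ) := by
    refine Continuous.enorm ?_; fun_prop
  have hswap : ∫⁻ a in closedBall x₀ r, ∫⁻ b in closedBall x₀ r,
        ‖u a - u ((1/2 : ℝ) • a + (1/2 : ℝ) • b)‖ₑ =
      ∫⁻ a in closedBall x₀ r, ∫⁻ b in closedBall x₀ r,
        ‖u b - u ((1/2 : ℝ) • b + (1/2 : ℝ) • a)‖ₑ := by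
    rw [lintegral_lintegral_swap]
    exact (hc1.measurable.comp measurable_swap).aemeasurable
  calc _ ≤ ∫⁻ a in closedBall x₀ r, ∫⁻ b in closedBall x₀ r,
        (‖u b - u ((1/2 : ℝ) • b + (1/2 : ℝ) • a)‖ₑ +
        ‖u a - u ((1/2 : ℝ) • a + (1/2 : ℝ) • b)‖ₑ) := by
        refine lintegral_mono fun a => lintegral_mono fun b => ?_
        have : u b - u a = (u b - u ((1/2 : ℝ) • b + (1/2 : ℝ) • a)) -
          (u a - u ((1/2 : ℝ) • a + (1/2 : ℝ) • b)) := by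
          rw [add_comm ((1/2 : ℝ) • a)]; ring
        simp only [this]
        exact enorm_sub_le
    _ = (∫⁻ a in closedBall x₀ r, ∫⁻ b in closedBall x₀ r,
        ‖u b - u ((1/2 : ℝ) • b + (1/2 : ℝ) • a)‖ₑ) +
        ∫⁻ a in closedBall x₀ r, ∫⁻ b in closedBall x₀ r,
        ‖u a - u ((1/2 : ℝ) • a + (1/2 : ℝ) • b)‖ₑ := by
        rw [← lintegral_add_left (hc1.measurable.lintegral_prod_right')]
        refine lintegral_congr fun a => ?_
        rw [lintegral_add_left]
        exact hc1.measurable.comp measurable_prodMk_left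
    _ ≤ _ := by rw [hswap, two_mul]; gcongr

lemma L1d_lint {m : ℕ} {u : Euc m → ℝ} (h : Adm u) {W : Set (Euc m)} (hW : MeasurableSet W)
    (hf : volume W ≠ ⊤) : ∫⁻ x, ‖u x - W.indicator 1 x‖ₑ = ENNReal.ofReal (L1d u W) := by
  unfold L1d
  rw [ofReal_integral_eq_lintegral_ofReal (h.int_diff hW hf) (Eventually.of_forall fun _ => abs_nonneg _)]
  refine lintegral_congr fun x => ?_
  rw [← Real.norm_eq_abs, ofReal_norm]

lemma relIso {m : ℕ} {u : Euc m → ℝ} (h : Adm u) {W : Set (Euc m)} (hW : MeasurableSet W)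
    (hf : volume W ≠ ⊤) (x₀ : Euc m) {r : ℝ} (hr : 0 < r) :
    volume.real (W ∩ closedBall x₀ r) * volume.real (closedBall x₀ r \ W) ≤
      volume.real (closedBall x₀ r) *
      (2 * L1d u W + 2 * (r * 2 ^ m) * ∫ x in closedBall x₀ r, ‖fderiv ℝ u x‖) := by
  set B := closedBall x₀ r with hB
  have hBm : MeasurableSet B := measurableSet_closedBall
  have hBf : volume B ≠ ⊤ := measure_closedBall_lt_top.ne
  have hL0 : 0 ≤ L1d u W := integral_nonneg fun _ => abs_nonneg _
  have hJ0 : 0 ≤ ∫ x in B, ‖fderiv ℝ u x‖ := integral_nonneg fun _ => norm_nonneg _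
  have hJ : ∫⁻ x in B, ‖fderiv ℝ u x‖ₑ = ENNReal.ofReal (∫ x in B, ‖fderiv ℝ u x‖) := by
    rw [ofReal_integral_eq_lintegral_ofReal h.int_fderiv.integrableOn
      (Eventually.of_forall fun _ => norm_nonneg _)]
    simp
  have hmW : Measurable (fun x => ‖u x - W.indicator 1 x‖ₑ) := by
    have : Measurable (W.indicator (1 : Euc m → ℝ)) := measurable_one.indicator hW
    exact (h.cd.continuous.measurable.sub this).enorm
  have hD : ∫⁻ x in B, ‖u x - W.indicator 1 x‖ₑ ≤ ENNReal.ofReal (L1d u W) := by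
    rw [← L1d_lint h hW hf]; exact setLIntegral_le_lintegral _ _
  have hc1 : Continuous (fun p : Euc m × Euc m => ‖u p.2 - u p.1‖ₑ) := by
    have := h.cd.continuous
    refine Continuous.enorm ?_; fun_prop
  have main : volume (W ∩ B) * volume (B \ W) ≤ 2 * (volume B * ENNReal.ofReal (L1d u W)) +
      2 * (volume B * ENNReal.ofReal (r * 2 ^ m) * ENNReal.ofReal (∫ x in B, ‖fderiv ℝ u x‖)) := by
    calc volume (W ∩ B) * volume (B \ W)
        = ∫⁻ a in B, ∫⁻ b in B, (W.indicator 1 a * (Wᶜ.indicator 1 b : ℝ≥0∞)) := by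
          simp_rw [lintegral_const_mul _ (measurable_one.indicator hW.compl)]
          rw [lintegral_mul_const _ (measurable_one.indicator hW)]
          rw [lintegral_indicator_one hW, lintegral_indicator_one hW.compl,
            Measure.restrict_apply hW, Measure.restrict_apply hW.compl, inter_comm Wᶜ, sdiff_eq]
      _ ≤ ∫⁻ a in B, ∫⁻ b in B, ((‖u b - u a‖ₑ + ‖u b - W.indicator 1 b‖ₑ) +
            ‖u a - W.indicator 1 a‖ₑ) := by
          refine lintegral_mono fun a => lintegral_mono fun b => ?_
          by_cases ha : a ∈ W
          · by_cases hb : b ∈ W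
            · simp [hb]
            · have : (1:ℝ) = (u b - W.indicator 1 b) - (u b - u a) - (u a - W.indicator 1 a) := by
                simp [ha, hb]
              have h3 : ‖(1:ℝ)‖ₑ ≤ ‖u b - W.indicator 1 b‖ₑ + ‖u b - u a‖ₑ + ‖u a - W.indicator 1 a‖ₑ := by
                rw [this]
                refine enorm_sub_le.trans ?_
                gcongr
                exact enorm_sub_le
              simp only [ha, mem_compl_iff, hb, not_false_eq_true, indicator_of_mem, Pi.one_apply,
                mul_one] at h3 ⊢
              rw [add_comm ‖u b - u a‖ₑ]
              simpa using h3
          · simp [ha]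
      _ = (∫⁻ a in B, ∫⁻ b in B, ‖u b - u a‖ₑ) + (∫⁻ a in B, ∫⁻ b in B, ‖u b - W.indicator 1 b‖ₑ) +
            ∫⁻ a in B, ∫⁻ b in B, ‖u a - W.indicator 1 a‖ₑ := by
          rw [← lintegral_add_left (hc1.measurable.lintegral_prod_right'), ← lintegral_add_right]
          · refine lintegral_congr fun a => ?_
            rw [lintegral_add_right _ measurable_const, lintegral_add_right _ hmW]
          · simp only [lintegral_const]
            exact hmW.mul_const _
      _ ≤ 2 * (volume B * ENNReal.ofReal (r * 2 ^ m) * ENNReal.ofReal (∫ x in B, ‖fderiv ℝ u x‖)) +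
          volume B * ENNReal.ofReal (L1d u W) + volume B * ENNReal.ofReal (L1d u W) := by
          have h1 := poinc h.cd x₀ hr.le
          rw [← hB, hJ] at h1
          gcongr
          · rw [lintegral_const, Measure.restrict_apply_univ, mul_comm]; gcongr
          · simp only [lintegral_const, Measure.restrict_apply_univ]
            rw [lintegral_mul_const _ hmW, mul_comm]; gcongr
      _ = _ := by ring
  have h2 := ENNReal.toReal_mono (by finiteness) main
  rw [ENNReal.toReal_add (by finiteness) (by finiteness)] at h2
  simp only [ENNReal.toReal_mul, ENNReal.toReal_ofReal hL0, ENNReal.toReal_ofReal hJ0,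
    ENNReal.toReal_ofReal (by positivity : 0 ≤ r * 2 ^ m), ENNReal.toReal_ofNat] at h2
  simp only [measureReal_def]
  nlinarith [h2]

/-- sum bound for disjoint balls with intermediate density -/
lemma fin_bound {m : ℕ} (hm : 0 < m) {W : Set (Euc m)} (hW : MeasurableSet W)
    (hf : volume W ≠ ⊤) {P : ℝ} (hA : Approx W P) {κ : ℝ} (hκ : 0 < κ)
    (F : Finset (Euc m)) (r : Euc m → ℝ) (hr : ∀ x ∈ F, 0 < r x)
    (hd : (F : Set (Euc m)).PairwiseDisjoint fun x => closedBall x (r x))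
    (h1 : ∀ x ∈ F, κ ≤ dens W x (r x)) (h2 : ∀ x ∈ F, dens W x (r x) ≤ 1 - κ) :
    ∑ x ∈ F, r x ^ (m - 1) ≤ 4 * 2 ^ m / (κ ^ 2 * vb m) * P := by
  have hv := vb_pos m
  have hη : ∃ η > 0, ∀ x ∈ F, 2 * η ≤ κ ^ 2 * (vb m * r x ^ m) / 2 := by
    rcases F.eq_empty_or_nonempty with rfl | hne
    · exact ⟨1, one_pos, by simp⟩
    obtain ⟨x₁, hx₁, hmin⟩ := F.exists_min_image r hne
    have := hr x₁ hx₁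
    refine ⟨κ ^ 2 * (vb m * r x₁ ^ m) / 4, by positivity, fun x hx => ?_⟩
    have h4 : r x₁ ^ m ≤ r x ^ m := by gcongr; exact hmin x hx
    have h5 : κ ^ 2 * (vb m * r x₁ ^ m) ≤ κ ^ 2 * (vb m * r x ^ m) := by gcongr
    linarith
  obtain ⟨η, hη, hηF⟩ := hη
  obtain ⟨u, hu, huL, huT⟩ := hA η hη
  have each : ∀ x ∈ F, r x ^ (m - 1) ≤
      4 * 2 ^ m / (κ ^ 2 * vb m) * ∫ y in closedBall x (r x), ‖fderiv ℝ u y‖ := by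
    intro x hx
    have hrx := hr x hx
    have hri := relIso hu hW hf x hrx
    set J := ∫ y in closedBall x (r x), ‖fderiv ℝ u y‖
    have hvol := vol_ball x hrx.le
    set b := vb m * r x ^ m with hb
    have hb0 : 0 < b := by positivity
    have e1 : κ * b ≤ volume.real (W ∩ closedBall x (r x)) := by
      have := h1 x hx; unfold dens at this; rwa [le_div_iff₀ hb0] at this
    have e2 : volume.real (W ∩ closedBall x (r x)) ≤ (1 - κ) * b := by
      have := h2 x hx; unfold dens at this; rwa [div_le_iff₀ hb0] at this
    have e3 : volume.real (W ∩ closedBall x (r x)) + volume.real (closedBall x (r x) \ W) = b := by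
      rw [← hvol, inter_comm]
      exact measureReal_inter_add_sdiff₀ hW.nullMeasurableSet measure_closedBall_lt_top.ne
    have e4 : κ * b ≤ volume.real (closedBall x (r x) \ W) := by linarith
    rw [hvol] at hri
    have e5 : (κ * b) * (κ * b) ≤ b * (2 * L1d u W + 2 * (r x * 2 ^ m) * J) :=
      le_trans (by gcongr) hri
    have e6 : κ ^ 2 * b ≤ 2 * L1d u W + 2 * (r x * 2 ^ m) * J := by
      have : b * (κ ^ 2 * b) ≤ b * (2 * L1d u W + 2 * (r x * 2 ^ m) * J) := by
        calc _ = (κ * b) * (κ * b) := by ring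
          _ ≤ _ := e5
      exact le_of_mul_le_mul_left this hb0
    have e7 := hηF x hx
    have e8 : κ ^ 2 * b ≤ 4 * (r x * 2 ^ m) * J := by linarith
    have hpow : r x ^ m = r x ^ (m - 1) * r x := by
      rw [← pow_succ]; congr 1; omega
    rw [div_mul_eq_mul_div, le_div_iff₀ (by positivity)]
    rw [hb, hpow] at e8
    have : r x * (r x ^ (m - 1) * (κ ^ 2 * vb m)) ≤ r x * (4 * 2 ^ m * J) := by
      calc _ = κ ^ 2 * (vb m * (r x ^ (m - 1) * r x)) := by ring
        _ ≤ _ := e8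
        _ = _ := by ring
    exact le_of_mul_le_mul_left this hrx
  calc _ ≤ ∑ x ∈ F, 4 * 2 ^ m / (κ ^ 2 * vb m) * ∫ y in closedBall x (r x), ‖fderiv ℝ u y‖ :=
        Finset.sum_le_sum each
    _ = 4 * 2 ^ m / (κ ^ 2 * vb m) * ∑ x ∈ F, ∫ y in closedBall x (r x), ‖fderiv ℝ u y‖ := by
        rw [Finset.mul_sum]
    _ ≤ _ := by
        gcongr
        exact (sum_setInt_le hu.int_fderiv (fun _ => norm_nonneg _) F r hd).trans huT

lemma TV_lint {m : ℕ} {f : Euc m → ℝ} (hf : ContDiff ℝ 1 f) (hc : HasCompactSupport f) :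
    ∫⁻ x, ‖fderiv ℝ f x‖ₑ = ENNReal.ofReal (TV f) := by
  unfold TV
  have hi : Integrable (fun x => ‖fderiv ℝ f x‖) :=
    ((hf.continuous_fderiv one_ne_zero).integrable_of_hasCompactSupport (hc.fderiv ℝ)).norm
  rw [ofReal_integral_eq_lintegral_ofReal hi (Eventually.of_forall fun _ => norm_nonneg _)]
  simp

lemma iso_one : ∀ f : Euc 1 → ℝ, ContDiff ℝ 1 f → HasCompactSupport f → ∀ x, |f x| ≤ TV f := by
  intro f hf hc x
  let L := (OrthonormalBasis.singleton (Fin 1) ℝ).repr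
  have hmp : MeasurePreserving L := (OrthonormalBasis.singleton (Fin 1) ℝ).measurePreserving_repr
  have h1 := HasCompactSupport.enorm_le_lintegral_Ici_deriv (f := fun t => f (L t))
    (hf.comp L.contDiff) (hc.comp_homeomorph L.toHomeomorph) (L.symm x)
  have h2 : ∀ t, ‖deriv (fun t => f (L t)) t‖ₑ ≤ ‖fderiv ℝ f (L t)‖ₑ := by
    intro t
    have hd : HasDerivAt (fun t => f (L t)) (fderiv ℝ f (L t) (L 1)) t := by
      have := (hf.differentiable one_ne_zero (L t)).hasFDerivAt.comp_hasDerivAt t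
        (L.toContinuousLinearEquiv.toContinuousLinearMap.hasDerivAt (x := t))
      exact this
    rw [hd.deriv]
    refine (ContinuousLinearMap.le_opENorm _ _).trans ?_
    have : ‖L (1:ℝ)‖ₑ = 1 := by
      have h0 : ‖L (1:ℝ)‖ = 1 := (L.norm_map 1).trans norm_one
      rw [← ofReal_norm, h0]; simp
    rw [this, mul_one]
  have h3 : ‖f x‖ₑ ≤ ENNReal.ofReal (TV f) := by
    rw [← TV_lint hf hc, ← hmp.lintegral_comp (hf.continuous_fderiv one_ne_zero).enorm.measurable]
    simp only [LinearIsometryEquiv.apply_symm_apply] at h1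
    exact h1.trans ((setLIntegral_le_lintegral _ _).trans (lintegral_mono h2))
  have hTV : 0 ≤ TV f := integral_nonneg fun _ => norm_nonneg _
  rw [← ofReal_norm, ENNReal.ofReal_le_ofReal_iff hTV] at h3
  exact h3

lemma iso {m : ℕ} (hm : 0 < m) : ∃ C > 0, ∀ f : Euc m → ℝ, ContDiff ℝ 1 f → HasCompactSupport f →
    ∀ S : Set (Euc m), MeasurableSet S → 0 < volume.real S → (∀ x ∈ S, 1 / 2 ≤ f x) →
    (volume.real S) ^ (((m : ℝ) - 1) / m) ≤ C * TV f := by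
  rcases Nat.lt_or_ge 1 m with hm1 | hm1
  · have hm1' : (1 : NNReal) < m := by exact_mod_cast hm1
    have hp := NNReal.HolderConjugate.conjExponent hm1'
    set p := NNReal.conjExponent (m : NNReal) with hpdef
    have hp0 : 0 < (p : ℝ) := hp.coe.symm.pos
    have hpe : (1 / (p : ℝ)) = ((m : ℝ) - 1) / m := by
      have := hp.coe.one_sub_inv
      simp only [NNReal.coe_natCast] at this
      rw [one_div, ← this]
      have : (m : ℝ) ≠ 0 := by positivity
      field_simp
    set K := eLpNormLESNormFDerivOneConst (volume : Measure (Euc m)) p with hK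
    refine ⟨2 * (K + 1), by positivity, fun f hf hc S hS hS0 hfS => ?_⟩
    have g := eLpNorm_le_eLpNorm_fderiv_one (volume : Measure (Euc m)) hf hc (p := p)
      (by simpa using hp)
    rw [eLpNorm_one_eq_lintegral_enorm, TV_lint hf hc, ← hK] at g
    have ch := mul_meas_ge_le_pow_eLpNorm' (volume : Measure (Euc m)) (p := (p : ℝ≥0∞))
      (by simpa using hp0.ne') ENNReal.coe_ne_top (hf.continuous.aestronglyMeasurable (μ := volume))
      (ENNReal.ofReal (1 / 2))
    have hSsub : S ⊆ {x | ENNReal.ofReal (1 / 2) ≤ ‖f x‖ₑ} := by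
      intro x hx
      simp only [mem_ofPred_eq, ← ofReal_norm]
      exact ENNReal.ofReal_le_ofReal ((hfS x hx).trans (le_abs_self _))
    have ch2 : ENNReal.ofReal (1/2) ^ (p : ℝ) * volume S ≤ eLpNorm f p volume ^ (p : ℝ) := by
      refine le_trans ?_ ch
      simp only [ENNReal.coe_toReal]
      gcongr
    have ch3 := ENNReal.rpow_le_rpow ch2 (one_div_nonneg.2 hp0.le)
    rw [ENNReal.mul_rpow_of_nonneg _ _ (one_div_nonneg.2 hp0.le), ← ENNReal.rpow_mul,
      ← ENNReal.rpow_mul, mul_one_div_cancel hp0.ne', ENNReal.rpow_one, ENNReal.rpow_one] at ch3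
    have ch4 := ch3.trans g
    have hTV : 0 ≤ TV f := integral_nonneg fun _ => norm_nonneg _
    have ch5 := ENNReal.toReal_mono (by finiteness) ch4
    rw [ENNReal.toReal_mul, ENNReal.toReal_mul, ENNReal.toReal_ofReal hTV,
      ENNReal.toReal_ofReal (by norm_num), ← ENNReal.toReal_rpow, hpe] at ch5
    simp only [ENNReal.coe_toReal] at ch5
    rw [measureReal_def]
    nlinarith
  · have : m = 1 := by omega
    subst this
    refine ⟨2, two_pos, fun f hf hc S hS hS0 hfS => ?_⟩
    have hne : S.Nonempty := by
      rw [nonempty_iff_ne_empty]; rintro rfl; simp at hS0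
    obtain ⟨x, hx⟩ := hne
    have h1 := iso_one f hf hc x
    have h2 := hfS x hx
    have h3 := le_abs_self (f x)
    simp only [Nat.cast_one, sub_self, zero_div, Real.rpow_zero]
    linarith

/-- cutoff data -/
structure Cut {m : ℕ} (M : ℝ) (x : Euc m) (r : ℝ) (η : Euc m → ℝ) : Prop where
  cd : ContDiff ℝ 1 η
  nonneg : ∀ y, 0 ≤ η y
  le_one : ∀ y, η y ≤ 1
  one : ∀ y ∈ closedBall x r, η y = 1
  zero : ∀ y, y ∉ closedBall x (2 * r) → η y = 0
  dzero : ∀ y, y ∉ closedBall x (2 * r) → fderiv ℝ η y = 0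
  bd : ∀ y, ‖fderiv ℝ η y‖ ≤ M / r

lemma exists_cut (m : ℕ) : ∃ M > 0, ∀ (x : Euc m) (r : ℝ), 0 < r → ∃ η, Cut M x r η := by
  let b : ContDiffBump (0 : Euc m) := ⟨1, 2, one_pos, by norm_num⟩
  have hb : ContDiff ℝ 1 b := b.contDiff
  obtain ⟨M, hM⟩ := (hb.continuous_fderiv one_ne_zero).bounded_above_of_compact_support
    (b.hasCompactSupport.fderiv ℝ)
  refine ⟨|M| + 1, by positivity, fun x r hr => ⟨fun y => b (r⁻¹ • (y - x)), ?_⟩⟩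
  have hz : ∀ y, y ∉ closedBall x (2 * r) → b (r⁻¹ • (y - x)) = 0 := by
    intro y hy
    apply b.zero_of_le_dist
    rw [dist_zero_right, norm_smul, norm_inv, Real.norm_of_nonneg hr.le]
    rw [mem_closedBall, dist_eq_norm, not_le] at hy
    change (2:ℝ) ≤ _
    rw [le_inv_mul_iff₀ hr]; linarith
  refine ⟨?_, fun _ => b.nonneg, fun _ => b.le_one, ?_, hz, ?_, ?_⟩
  · exact hb.comp (by fun_prop)
  · intro y hy
    apply b.one_of_mem_closedBall
    rw [mem_closedBall, dist_zero_right, norm_smul, norm_inv, Real.norm_of_nonneg hr.le]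
    rw [mem_closedBall, dist_eq_norm] at hy
    change _ ≤ (1:ℝ)
    rw [inv_mul_le_iff₀ hr]; linarith
  · intro y hy
    have : (fun y => b (r⁻¹ • (y - x))) =ᶠ[𝓝 y] fun _ => 0 := by
      filter_upwards [isClosed_closedBall.isOpen_compl.mem_nhds hy] with z hz'
      exact hz z hz'
    rw [this.fderiv_eq]; simp
  · intro y
    have h1 : HasFDerivAt (fun y : Euc m => r⁻¹ • (y - x)) (r⁻¹ • ContinuousLinearMap.id ℝ (Euc m)) y :=
      ((hasFDerivAt_id y).sub_const x).const_smul r⁻¹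
    have h2 := (hb.differentiable one_ne_zero (r⁻¹ • (y - x))).hasFDerivAt.comp y h1
    have h3 : fderiv ℝ (fun y => b (r⁻¹ • (y - x))) y =
      (fderiv ℝ b (r⁻¹ • (y - x))).comp (r⁻¹ • ContinuousLinearMap.id ℝ (Euc m)) := h2.fderiv
    rw [h3, ContinuousLinearMap.comp_smul, ContinuousLinearMap.comp_id, norm_smul, norm_inv,
      Real.norm_of_nonneg hr.le, div_eq_inv_mul]
    gcongr
    have := hM (r⁻¹ • (y - x)); have := le_abs_self M; linarith

lemma Cut.cs {m : ℕ} {M : ℝ} {x : Euc m} {r : ℝ} {η : Euc m → ℝ} (h : Cut M x r η) :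
    HasCompactSupport η :=
  HasCompactSupport.intro (isCompact_closedBall x (2 * r)) (fun y hy => h.zero y hy)

lemma setInt_u {m : ℕ} {u : Euc m → ℝ} (h : Adm u) {W : Set (Euc m)} (hW : MeasurableSet W)
    (hf : volume W ≠ ⊤) (B : Set (Euc m)) :
    ∫ y in B, u y ≤ volume.real (W ∩ B) + ∫ y in B, |u y - W.indicator 1 y| := by
  have hi := int_ind hW hf
  have e : ∫ y in B, W.indicator (1 : Euc m → ℝ) y = volume.real (W ∩ B) := by
    rw [integral_indicator_one hW, measureReal_def, measureReal_def, Measure.restrict_apply hW]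
  rw [← e, ← integral_add hi.integrableOn (h.int_diff hW hf).integrableOn]
  refine integral_mono h.int.integrableOn (hi.add (h.int_diff hW hf)).integrableOn fun y => ?_
  have := le_abs_self (u y - W.indicator 1 y)
  simp only
  linarith

lemma int_cut_mul {m : ℕ} {u : Euc m → ℝ} (h : Adm u) {M : ℝ} {x : Euc m} {r : ℝ}
    {η : Euc m → ℝ} (hc : Cut M x r η) : Integrable (fun y => η y * ‖fderiv ℝ u y‖) := by
  have h1 := h.cont_fderiv.norm
  exact (hc.cd.continuous.mul h1).integrable_of_hasCompactSupport (hc.cs.mul_right)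

lemma int_cut_mul' {m : ℕ} {u : Euc m → ℝ} (h : Adm u) {M : ℝ} {x : Euc m} {r : ℝ}
    {η : Euc m → ℝ} (hc : Cut M x r η) : Integrable (fun y => u y * ‖fderiv ℝ η y‖) := by
  have h1 := (hc.cd.continuous_fderiv one_ne_zero).norm
  exact (h.cd.continuous.mul h1).integrable_of_hasCompactSupport (h.cs.mul_right)

lemma gain {m : ℕ} (hm : 0 < m) {C M : ℝ} (hC : 0 < C) (hM : 0 < M)
    (hiso : ∀ f : Euc m → ℝ, ContDiff ℝ 1 f → HasCompactSupport f →
      ∀ S : Set (Euc m), MeasurableSet S → 0 < volume.real S → (∀ x ∈ S, 1 / 2 ≤ f x) →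
      (volume.real S) ^ (((m : ℝ) - 1) / m) ≤ C * TV f)
    {u : Euc m → ℝ} (h : Adm u) {W : Set (Euc m)} (hW : MeasurableSet W) (hf : volume W ≠ ⊤)
    {x : Euc m} {r : ℝ} (hr : 0 < r) {η : Euc m → ℝ} (hc : Cut M x r η) {τ : ℝ} (hτ : 0 < τ)
    (hL : 2 * L1d u W ≤ τ / 4 * (vb m * r ^ m)) (h1 : τ / 2 ≤ dens W x r)
    (h2 : dens W x (2 * r) ≤ τ) :
    (C⁻¹ * (τ * vb m / 4) ^ (((m : ℝ) - 1) / m) - 4 * M * τ * vb m * 2 ^ m) * r ^ (m - 1) ≤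
      (∫ y, η y * ‖fderiv ℝ u y‖) - ∫ y, u y * ‖fderiv ℝ η y‖ := by
  have hv := vb_pos m
  have hL0 : 0 ≤ L1d u W := integral_nonneg fun _ => abs_nonneg _
  have hpow : r ^ m = r ^ (m - 1) * r := by rw [← pow_succ]; congr 1; omega
  have hmR : (m : ℝ) ≠ 0 := by positivity
  -- upper bound of the boundary term
  have hup : ∫ y, u y * ‖fderiv ℝ η y‖ ≤ 2 * M * τ * vb m * 2 ^ m * r ^ (m - 1) := by
    have e0 : ∫ y, u y * ‖fderiv ℝ η y‖ ≤ ∫ y in closedBall x (2 * r), u y * (M / r) := by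
      rw [← integral_indicator measurableSet_closedBall]
      refine integral_mono (int_cut_mul' h hc)
        ((h.int.mul_const _).indicator measurableSet_closedBall) fun y => ?_
      by_cases hy : y ∈ closedBall x (2 * r)
      · simp only [indicator_of_mem hy]
        exact mul_le_mul_of_nonneg_left (hc.bd y) (h.nonneg y)
      · simp [indicator_of_notMem hy, hc.dzero y hy]
    rw [integral_mul_const] at e0
    have e1 := setInt_u h hW hf (closedBall x (2 * r))
    have e2 : ∫ y in closedBall x (2 * r), |u y - W.indicator 1 y| ≤ L1d u W :=
      setIntegral_le_integral (h.int_diff hW hf) (Eventually.of_forall fun _ => abs_nonneg _)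
    have e3 : volume.real (W ∩ closedBall x (2 * r)) ≤ τ * (vb m * (2 * r) ^ m) := by
      unfold dens at h2; rwa [div_le_iff₀ (by positivity)] at h2
    rw [mul_pow] at e3
    have e4 : L1d u W ≤ τ * (vb m * (2 ^ m * r ^ m)) := by
      have : (1:ℝ) ≤ 2 ^ m := one_le_pow₀ (by norm_num)
      have h5 : τ * (vb m * (1 * r ^ m)) ≤ τ * (vb m * (2 ^ m * r ^ m)) := by gcongr
      have : 0 ≤ τ * (vb m * r ^ m) := by positivity
      linarith
    have e5 : ∫ y in closedBall x (2 * r), u y ≤ 2 * (τ * (vb m * (2 ^ m * r ^ m))) := by linarith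
    calc _ ≤ (∫ y in closedBall x (2 * r), u y) * (M / r) := e0
      _ ≤ 2 * (τ * (vb m * (2 ^ m * r ^ m))) * (M / r) := by gcongr
      _ = _ := by rw [hpow]; field_simp
  -- lower bound of TV
  have hfc : ContDiff ℝ 1 (fun y => η y * u y) := hc.cd.mul h.cd
  have hfs : HasCompactSupport (fun y => η y * u y) := hc.cs.mul_right
  set S : Set (Euc m) := (W ∩ closedBall x r) ∩ {y | 1 / 2 ≤ u y} with hS
  have hSc : MeasurableSet {y | 1 / 2 ≤ u y} :=
    (isClosed_le continuous_const h.cd.continuous).measurableSet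
  have hWB : MeasurableSet (W ∩ closedBall x r) := hW.inter measurableSet_closedBall
  have hWBf : volume (W ∩ closedBall x r) ≠ ⊤ := measure_ne_top_of_subset inter_subset_left hf
  have hSvol : τ / 4 * (vb m * r ^ m) ≤ volume.real S := by
    have e1 : τ / 2 * (vb m * r ^ m) ≤ volume.real (W ∩ closedBall x r) := by
      unfold dens at h1; rwa [le_div_iff₀ (by positivity)] at h1
    have e2 : volume.real S + volume.real ((W ∩ closedBall x r) \ {y | 1 / 2 ≤ u y}) =
        volume.real (W ∩ closedBall x r) :=
      measureReal_inter_add_sdiff₀ hSc.nullMeasurableSet hWBf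
    have e3 : (1 / 2) * volume.real ((W ∩ closedBall x r) \ {y | 1 / 2 ≤ u y}) ≤ L1d u W := by
      have hmeas := hWB.diff hSc
      calc _ = ∫ y in (W ∩ closedBall x r) \ {y | 1 / 2 ≤ u y}, (1 / 2 : ℝ) := by
            rw [setIntegral_const, smul_eq_mul, mul_comm]
        _ ≤ ∫ y in (W ∩ closedBall x r) \ {y | 1 / 2 ≤ u y}, |u y - W.indicator 1 y| := by
            refine setIntegral_mono_on (integrableOn_const
              (measure_ne_top_of_subset sdiff_subset hWBf)) (h.int_diff hW hf).integrableOn hmeas ?_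
            rintro y ⟨⟨hyW, _⟩, hy⟩
            simp only [mem_ofPred_eq, not_le] at hy
            rw [indicator_of_mem hyW, abs_sub_comm]
            refine le_trans ?_ (le_abs_self _)
            simp only [Pi.one_apply]; linarith
        _ ≤ _ := setIntegral_le_integral (h.int_diff hW hf) (Eventually.of_forall fun _ => abs_nonneg _)
    linarith
  have hS0 : 0 < volume.real S := lt_of_lt_of_le (by positivity) hSvol
  have hlow := hiso _ hfc hfs S (hWB.inter hSc) hS0 (by
    rintro y ⟨⟨_, hyB⟩, hy⟩
    simp only [hc.one y hyB, one_mul]; exact hy)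
  have hexp : 0 ≤ ((m : ℝ) - 1) / m := by
    apply div_nonneg _ (by positivity)
    have : (1:ℝ) ≤ m := by exact_mod_cast hm
    linarith
  have hrp : (r ^ m) ^ (((m : ℝ) - 1) / m) = r ^ (m - 1) := by
    rw [← Real.rpow_natCast, ← Real.rpow_mul hr.le, mul_div_cancel₀ _ hmR, ← Real.rpow_natCast,
      Nat.cast_sub hm]; simp
  have hlow2 : (τ * vb m / 4) ^ (((m : ℝ) - 1) / m) * r ^ (m - 1) ≤ C * TV (fun y => η y * u y) := by
    refine le_trans ?_ hlow
    rw [← hrp, ← Real.mul_rpow (by positivity) (by positivity)]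
    refine Real.rpow_le_rpow (by positivity) ?_ hexp
    calc _ = τ / 4 * (vb m * r ^ m) := by ring
      _ ≤ _ := hSvol
  have hTV : TV (fun y => η y * u y) ≤ (∫ y, η y * ‖fderiv ℝ u y‖) + ∫ y, u y * ‖fderiv ℝ η y‖ := by
    unfold TV
    rw [← integral_add (int_cut_mul h hc) (int_cut_mul' h hc)]
    refine integral_mono ((hfc.continuous_fderiv one_ne_zero).integrable_of_hasCompactSupport
      (hfs.fderiv ℝ)).norm ((int_cut_mul h hc).add (int_cut_mul' h hc)) fun y => ?_
    simp only
    rw [fderiv_fun_mul (hc.cd.differentiable one_ne_zero y) (h.cd.differentiable one_ne_zero y)]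
    refine (norm_add_le _ _).trans ?_
    rw [norm_smul, norm_smul, Real.norm_of_nonneg (hc.nonneg y), Real.norm_of_nonneg (h.nonneg y)]
  have h9 : C⁻¹ * (τ * vb m / 4) ^ (((m : ℝ) - 1) / m) * r ^ (m - 1) ≤ TV (fun y => η y * u y) := by
    rw [mul_assoc, inv_mul_le_iff₀ hC]; exact hlow2
  rw [sub_mul]
  linarith

lemma TV_nonneg {m : ℕ} (u : Euc m → ℝ) : 0 ≤ TV u := integral_nonneg fun _ => norm_nonneg _

lemma L1d_nonneg {m : ℕ} (u : Euc m → ℝ) (W : Set (Euc m)) : 0 ≤ L1d u W :=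
  integral_nonneg fun _ => abs_nonneg _

lemma Approx.nonneg {m : ℕ} {W : Set (Euc m)} {P : ℝ} (h : Approx W P) : 0 ≤ P := by
  obtain ⟨u, _, _, hu⟩ := h 1 one_pos
  exact (TV_nonneg u).trans hu

/-- almost minimizing approximants -/
lemma minseq {m : ℕ} {W : Set (Euc m)} {P : ℝ} (hA : Approx W P) (ε : ℝ) (hε : 0 < ε) :
    ∃ η₀ > 0, ∀ η > 0, ∃ u, Adm u ∧ L1d u W ≤ η ∧
      ∀ u', Adm u' → L1d u' W ≤ η₀ → TV u ≤ TV u' + ε := by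
  let T : ℝ → Set ℝ := fun η => {t | ∃ u, Adm u ∧ L1d u W ≤ η ∧ TV u = t}
  let I : ℝ → ℝ := fun η => sInf (T η)
  have hbd : ∀ η, BddBelow (T η) := fun η => ⟨0, by rintro t ⟨u, _, _, rfl⟩; exact TV_nonneg u⟩
  have hne : ∀ η > 0, (T η).Nonempty := fun η hη => by
    obtain ⟨u, h1, h2, _⟩ := hA η hη
    exact ⟨_, u, h1, h2, rfl⟩
  have hIP : ∀ η > 0, I η ≤ P := fun η hη => by
    obtain ⟨u, h1, h2, h3⟩ := hA η hη
    exact (csInf_le (hbd η) ⟨u, h1, h2, rfl⟩).trans h3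
  let Q := sSup (I '' Ioi 0)
  have hQb : BddAbove (I '' Ioi 0) := ⟨P, by rintro _ ⟨η, hη, rfl⟩; exact hIP η hη⟩
  obtain ⟨_, ⟨η₀, hη₀, rfl⟩, hlt⟩ := exists_lt_of_lt_csSup (s := I '' Ioi 0)
    (b := Q - ε / 2) (by exact ⟨_, 1, mem_Ioi.2 one_pos, rfl⟩) (by change Q - ε / 2 < Q; linarith)
  refine ⟨η₀, hη₀, fun η hη => ?_⟩
  obtain ⟨_, ⟨u, h1, h2, rfl⟩, h3⟩ := exists_lt_of_csInf_lt (hne η hη)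
    (show sInf (T η) < I η + ε / 2 by change I η < _; linarith)
  refine ⟨u, h1, h2, fun u' h1' h2' => ?_⟩
  have h4 : I η₀ ≤ TV u' := csInf_le (hbd η₀) ⟨u', h1', h2', rfl⟩
  have h5 : I η ≤ Q := le_csSup hQb ⟨η, hη, rfl⟩
  linarith

lemma dens_nonneg {m : ℕ} (W : Set (Euc m)) (x : Euc m) {r : ℝ} (hr : 0 ≤ r) : 0 ≤ dens W x r := by
  have := vb_pos m
  unfold dens; positivity

lemma dens_mono {m : ℕ} (W : Set (Euc m)) (x : Euc m) {r s : ℝ} (hr : 0 < r) (hrs : r ≤ s)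
    (hs : s ≤ 2 * r) : dens W x r ≤ 2 ^ m * dens W x s := by
  have hv := vb_pos m
  have hs0 : 0 < s := hr.trans_le hrs
  unfold dens
  rw [← mul_div_assoc, div_le_div_iff₀ (by positivity) (by positivity)]
  have h1 : volume.real (W ∩ closedBall x r) ≤ volume.real (W ∩ closedBall x s) :=
    measureReal_mono (inter_subset_inter_right _ (closedBall_subset_closedBall hrs))
      (measure_ne_top_of_subset inter_subset_right measure_closedBall_lt_top.ne)
  calc _ ≤ volume.real (W ∩ closedBall x s) * (vb m * (2 * r) ^ m) := by gcongr
    _ = _ := by rw [mul_pow]; ring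

lemma Cut.sum_le_one {m : ℕ} {M : ℝ} (F : Finset (Euc m)) (ρ : Euc m → ℝ) (η : Euc m → Euc m → ℝ)
    (hc : ∀ x ∈ F, Cut M x (ρ x) (η x))
    (hd : (F : Set (Euc m)).PairwiseDisjoint fun x => closedBall x (2 * ρ x)) (y : Euc m) :
    ∑ x ∈ F, η x y ≤ 1 := by
  by_cases h : ∃ x ∈ F, y ∈ closedBall x (2 * ρ x)
  · obtain ⟨x, hx, hy⟩ := h
    rw [Finset.sum_eq_single_of_mem x hx]
    · exact (hc x hx).le_one y
    · intro z hz hzx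
      refine (hc z hz).zero y fun hyz => ?_
      exact (Set.disjoint_left.1 (hd hx hz hzx.symm)) hy hyz
  · push Not at h
    rw [Finset.sum_eq_zero fun x hx => (hc x hx).zero y (h x hx)]
    exact zero_le_one

lemma surgery {m : ℕ} {M : ℝ} {u : Euc m → ℝ} (h : Adm u) {W : Set (Euc m)} (hW : MeasurableSet W)
    (hf : volume W ≠ ⊤) (F : Finset (Euc m)) (ρ : Euc m → ℝ) (η : Euc m → Euc m → ℝ)
    (hc : ∀ x ∈ F, Cut M x (ρ x) (η x))
    (hd : (F : Set (Euc m)).PairwiseDisjoint fun x => closedBall x (2 * ρ x)) :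
    ∃ u', Adm u' ∧ L1d u' W ≤ 2 * L1d u W + ∑ x ∈ F, volume.real (W ∩ closedBall x (2 * ρ x)) ∧
      TV u' ≤ TV u -
        ∑ x ∈ F, ((∫ y, η x y * ‖fderiv ℝ u y‖) - ∫ y, u y * ‖fderiv ℝ (η x) y‖) := by
  set g : Euc m → ℝ := fun y => ∑ x ∈ F, η x y with hg
  have hgc : ContDiff ℝ 1 g := ContDiff.sum fun x hx => (hc x hx).cd
  have hg0 : ∀ y, 0 ≤ g y := fun y => Finset.sum_nonneg fun x hx => (hc x hx).nonneg y
  have hg1 : ∀ y, g y ≤ 1 := Cut.sum_le_one F ρ η hc hd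
  have hA : Adm (fun y => u y * (1 - g y)) := by
    refine ⟨h.cd.mul (contDiff_const.sub hgc), h.cs.mul_right, fun y => ?_, fun y => ?_⟩
    · exact mul_nonneg (h.nonneg y) (by linarith [hg1 y])
    · exact mul_le_one₀ (h.le_one y) (by linarith [hg1 y]) (by linarith [hg0 y])
  refine ⟨_, hA, ?_, ?_⟩
  · have hi : ∀ x ∈ F, Integrable (fun y => u y * η x y) := fun x hx =>
      (h.cd.continuous.mul (hc x hx).cd.continuous).integrable_of_hasCompactSupport h.cs.mul_right
    have hi2 : Integrable (fun y => ∑ x ∈ F, u y * η x y) := integrable_finsetSum _ hi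
    have e1 : L1d (fun y => u y * (1 - g y)) W ≤ L1d u W + ∑ x ∈ F, ∫ y, u y * η x y := by
      unfold L1d
      rw [← integral_finsetSum _ hi, ← integral_add (h.int_diff hW hf) hi2]
      refine integral_mono (hA.int_diff hW hf) ((h.int_diff hW hf).add hi2) fun y => ?_
      simp only
      rw [← Finset.mul_sum]
      have e : u y * (1 - g y) - W.indicator 1 y = (u y - W.indicator 1 y) - u y * g y := by ring
      rw [e]
      refine (abs_sub _ _).trans ?_
      rw [abs_of_nonneg (mul_nonneg (h.nonneg y) (hg0 y))]
    have e2 : ∀ x ∈ F, ∫ y, u y * η x y ≤ volume.real (W ∩ closedBall x (2 * ρ x)) +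
        ∫ y in closedBall x (2 * ρ x), |u y - W.indicator 1 y| := by
      intro x hx
      refine le_trans ?_ (setInt_u h hW hf _)
      rw [← integral_indicator measurableSet_closedBall]
      refine integral_mono (hi x hx) (h.int.indicator measurableSet_closedBall) fun y => ?_
      by_cases hy : y ∈ closedBall x (2 * ρ x)
      · simp only [indicator_of_mem hy]
        exact mul_le_of_le_one_right (h.nonneg y) ((hc x hx).le_one y)
      · simp [indicator_of_notMem hy, (hc x hx).zero y hy]
    have e3 := Finset.sum_le_sum e2
    rw [Finset.sum_add_distrib] at e3
    have e4 := sum_setInt_le (h.int_diff hW hf) (fun _ => abs_nonneg _) F _ hd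
    change _ ≤ L1d u W at e4
    linarith
  · have hi1 : ∀ x ∈ F, Integrable (fun y => η x y * ‖fderiv ℝ u y‖) :=
      fun x hx => int_cut_mul h (hc x hx)
    have hi2 : ∀ x ∈ F, Integrable (fun y => u y * ‖fderiv ℝ (η x) y‖) :=
      fun x hx => int_cut_mul' h (hc x hx)
    have hi3 : ∀ x ∈ F, Integrable
        (fun y => η x y * ‖fderiv ℝ u y‖ - u y * ‖fderiv ℝ (η x) y‖) :=
      fun x hx => (hi1 x hx).sub (hi2 x hx)
    have e0 : ∑ x ∈ F, ((∫ y, η x y * ‖fderiv ℝ u y‖) - ∫ y, u y * ‖fderiv ℝ (η x) y‖) =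
        ∫ y, ∑ x ∈ F, (η x y * ‖fderiv ℝ u y‖ - u y * ‖fderiv ℝ (η x) y‖) := by
      rw [integral_finsetSum _ hi3]
      exact Finset.sum_congr rfl fun x hx => (integral_sub (hi1 x hx) (hi2 x hx)).symm
    have hi4 := integrable_finsetSum _ hi3
    unfold TV
    rw [e0, ← integral_sub h.int_fderiv hi4]
    refine integral_mono hA.int_fderiv (h.int_fderiv.sub hi4) fun y => ?_
    simp only
    have hgd : DifferentiableAt ℝ g y := hgc.differentiable one_ne_zero y
    have hgf : fderiv ℝ g y = ∑ x ∈ F, fderiv ℝ (η x) y :=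
      fderiv_fun_sum fun x hx => (hc x hx).cd.differentiable one_ne_zero y
    rw [fderiv_fun_mul (h.cd.differentiable one_ne_zero y) (hgd.const_sub 1), fderiv_const_sub]
    have n1 : ‖∑ x ∈ F, fderiv ℝ (η x) y‖ ≤ ∑ x ∈ F, ‖fderiv ℝ (η x) y‖ := norm_sum_le _ _
    refine (norm_add_le _ _).trans ?_
    rw [norm_smul, norm_smul, norm_neg, Real.norm_of_nonneg (h.nonneg y),
      Real.norm_of_nonneg (by linarith [hg1 y] : 0 ≤ 1 - g y), hgf, Finset.sum_sub_distrib,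
      ← Finset.sum_mul, ← Finset.mul_sum]
    have n2 := mul_le_mul_of_nonneg_left n1 (h.nonneg y)
    have : (1 - g y) * ‖fderiv ℝ u y‖ = ‖fderiv ℝ u y‖ - (∑ x ∈ F, η x y) * ‖fderiv ℝ u y‖ := by
      rw [hg]; ring
    linarith

lemma small_const {m : ℕ} (hm : 0 < m) {C M : ℝ} (hC : 0 < C) (hM : 0 < M) :
    ∃ κ₀ > 0, ∀ τ, 0 < τ → τ ≤ κ₀ →
      0 < C⁻¹ * (τ * vb m / 4) ^ (((m : ℝ) - 1) / m) - 4 * M * τ * vb m * 2 ^ m := by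
  have hv := vb_pos m
  have hmR : (m : ℝ) ≠ 0 := by positivity
  set q := 1 / (32 * M * 2 ^ m * C) with hq
  have hq0 : 0 < q := by positivity
  refine ⟨4 * q ^ m / vb m, by positivity, fun τ hτ hle => ?_⟩
  set s := τ * vb m / 4 with hs
  have hs0 : 0 < s := by positivity
  have hsq : s ≤ q ^ m := by
    rw [le_div_iff₀ hv] at hle; rw [hs]; linarith
  have h1 : s ^ (1 / (m : ℝ)) ≤ q := by
    calc s ^ (1 / (m : ℝ)) ≤ (q ^ m) ^ (1 / (m : ℝ)) :=
          Real.rpow_le_rpow hs0.le hsq (by positivity)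
      _ = q := by rw [one_div]; exact Real.pow_rpow_inv_natCast hq0.le hm.ne'
  have h2 : s = s ^ (((m : ℝ) - 1) / m) * s ^ (1 / (m : ℝ)) := by
    rw [← Real.rpow_add hs0, ← add_div, sub_add_cancel, div_self hmR, Real.rpow_one]
  set e := s ^ (((m : ℝ) - 1) / m) with he
  have he0 : 0 < e := Real.rpow_pos_of_pos hs0 _
  have h3 : s ≤ e * q := by rw [h2]; gcongr
  have h4 : 4 * M * τ * vb m * 2 ^ m = 16 * M * 2 ^ m * s := by rw [hs]; ring
  have h5 : 16 * M * 2 ^ m * s ≤ C⁻¹ * e / 2 := by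
    calc _ ≤ 16 * M * 2 ^ m * (e * q) := by gcongr
      _ = _ := by rw [hq]; field_simp; norm_num
  have h6 : 0 < C⁻¹ * e := by positivity
  rw [h4]; linarith

/-- low-density points are negligible -/
lemma L_null {m : ℕ} (hm : 0 < m) : ∃ κ₀ > 0, ∀ τ, 0 < τ → τ ≤ κ₀ → τ ≤ 1 / 2 →
    ∀ (W : Set (Euc m)) (P : ℝ), MeasurableSet W → volume W ≠ ⊤ → Approx W P →
    (μH[(m : ℝ) - 1] : Measure (Euc m)) {x | (∀ᶠ i : ℕ in atTop, dens W x ((1 / 2) ^ i) ≤ τ) ∧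
      ∃ᶠ i : ℕ in atTop, τ / 2 < dens W x ((1 / 2) ^ i)} = 0 := by
  obtain ⟨C, hC, hiso⟩ := iso hm
  obtain ⟨M, hM, hcut⟩ := exists_cut m
  obtain ⟨κ₀, hκ₀, hsmall⟩ := small_const hm hC hM
  refine ⟨κ₀, hκ₀, fun τ hτ hτκ hτ2 W P hW hf hA => ?_⟩
  have hc0 := hsmall τ hτ hτκ
  have hv := vb_pos m
  set c := C⁻¹ * (τ * vb m / 4) ^ (((m : ℝ) - 1) / m) - 4 * M * τ * vb m * 2 ^ m with hcdef
  have hP := hA.nonneg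
  set S : Set (Euc m) := {x | (∀ᶠ i : ℕ in atTop, dens W x ((1 / 2) ^ i) ≤ τ) ∧
      ∃ᶠ i : ℕ in atTop, τ / 2 < dens W x ((1 / 2) ^ i)} with hS
  set κ := τ / 2 / 2 ^ m with hκ
  have hκ0 : 0 < κ := by positivity
  have hκτ : κ ≤ 1 / 2 := by
    rw [hκ]
    refine (div_le_self (by positivity) (one_le_pow₀ (by norm_num))).trans (by linarith)
  set C1 := 4 * 2 ^ m / (κ ^ 2 * vb m) * P with hC1
  have hC10 : 0 ≤ C1 := by positivity
  have main : ∀ ε > 0, (μH[(m : ℝ) - 1] : Measure (Euc m)) S ≤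
      ENNReal.ofReal (8 ^ (m - 1) * (2 ^ (m - 1) * (ε / c))) := by
    intro ε hε
    obtain ⟨η₀, hη₀, hmin⟩ := minseq hA ε hε
    refine cov hm S _ (η₀ / 2 / (τ * vb m * C1 + 1)) (by positivity) fun δ hδ hδ₀ => ?_
    have hex : ∀ x, ∃ ρ : ℝ, x ∈ S → 0 < ρ ∧ 2 * ρ ≤ δ ∧ τ / 2 ≤ dens W x ρ ∧
        dens W x (2 * ρ) ≤ τ := by
      intro x
      by_cases hx : x ∈ S
      · obtain ⟨hx1, hx2⟩ := hx
        obtain ⟨N, hN⟩ := eventually_atTop.1 hx1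
        obtain ⟨N', hN'⟩ := exists_pow_lt_of_lt_one hδ (show (1/2 : ℝ) < 1 by norm_num)
        obtain ⟨i, hi, hi2⟩ := frequently_atTop.1 hx2 (max N N' + 1)
        have e : 2 * (1 / 2 : ℝ) ^ i = (1 / 2) ^ (i - 1) := by
          obtain ⟨j, rfl⟩ : ∃ j, i = j + 1 := ⟨i - 1, by omega⟩
          rw [pow_succ, Nat.add_sub_cancel]; ring
        refine ⟨(1 / 2) ^ i, fun _ => ⟨by positivity, ?_, hi2.le, ?_⟩⟩
        · rw [e]
          refine le_trans ?_ hN'.le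
          apply pow_le_pow_of_le_one (by norm_num) (by norm_num)
          have := le_max_right N N'; omega
        · rw [e]; apply hN
          have := le_max_left N N'; omega
      · exact ⟨0, fun h => absurd h hx⟩
    choose ρ hρ using hex
    refine ⟨fun x => 2 * ρ x, fun x hx => ⟨by linarith [(hρ x hx).1], (hρ x hx).2.1⟩, ?_⟩
    intro F hF hd
    have hpos : ∀ x ∈ F, 0 < ρ x := fun x hx => (hρ x (hF hx)).1
    have hsum1 : ∑ x ∈ F, (2 * ρ x) ^ (m - 1) ≤ C1 := by
      refine fin_bound hm hW hf hA hκ0 F _ (fun x hx => by linarith [hpos x hx]) hd ?_ ?_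
      · intro x hx
        have h1 := dens_mono W x (hpos x hx) (s := 2 * ρ x) (by linarith [hpos x hx]) le_rfl
        have h2 := (hρ x (hF hx)).2.2.1
        rw [hκ, div_le_iff₀ (by positivity)]; linarith
      · intro x hx
        have := (hρ x (hF hx)).2.2.2
        linarith
    have hη : ∃ η > 0, η ≤ η₀ / 4 ∧ ∀ x ∈ F, 2 * η ≤ τ / 4 * (vb m * ρ x ^ m) := by
      rcases F.eq_empty_or_nonempty with rfl | hne
      · exact ⟨η₀ / 4, by positivity, le_rfl, by simp⟩
      obtain ⟨x₁, hx₁, hmn⟩ := F.exists_min_image ρ hne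
      have := hpos x₁ hx₁
      refine ⟨min (η₀ / 4) (τ / 8 * (vb m * ρ x₁ ^ m)), by positivity, min_le_left _ _,
        fun x hx => ?_⟩
      have h4 : ρ x₁ ^ m ≤ ρ x ^ m := by gcongr; exact hmn x hx
      have h5 : τ / 8 * (vb m * ρ x₁ ^ m) ≤ τ / 8 * (vb m * ρ x ^ m) := by gcongr
      have h6 := min_le_right (η₀ / 4) (τ / 8 * (vb m * ρ x₁ ^ m))
      linarith
    obtain ⟨η, hη, hηη, hηF⟩ := hη
    obtain ⟨u, hu, huL, humin⟩ := hmin η hη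
    have hcx : ∀ x, ∃ ζ : Euc m → ℝ, x ∈ F → Cut M x (ρ x) ζ := by
      intro x
      by_cases hx : x ∈ F
      · obtain ⟨ζ, hζ⟩ := hcut x (ρ x) (hpos x hx)
        exact ⟨ζ, fun _ => hζ⟩
      · exact ⟨0, fun h => absurd h hx⟩
    choose ζ hζ using hcx
    obtain ⟨u', hu', huL', huT'⟩ := surgery hu hW hf F ρ ζ hζ hd
    have hvol : ∑ x ∈ F, volume.real (W ∩ closedBall x (2 * ρ x)) ≤ η₀ / 2 := by
      have e1 : ∀ x ∈ F, volume.real (W ∩ closedBall x (2 * ρ x)) ≤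
          τ * vb m * δ * (2 * ρ x) ^ (m - 1) := by
        intro x hx
        have h2 := (hρ x (hF hx)).2.2.2
        have h3 := (hρ x (hF hx)).2.1
        have hp := hpos x hx
        unfold dens at h2
        rw [div_le_iff₀ (by positivity)] at h2
        refine h2.trans ?_
        have hpow : (2 * ρ x) ^ m = (2 * ρ x) ^ (m - 1) * (2 * ρ x) := by
          rw [← pow_succ]; congr 1; omega
        rw [hpow]
        calc _ ≤ τ * (vb m * ((2 * ρ x) ^ (m - 1) * δ)) := by gcongr
          _ = _ := by ring
      calc _ ≤ ∑ x ∈ F, τ * vb m * δ * (2 * ρ x) ^ (m - 1) := Finset.sum_le_sum e1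
        _ = τ * vb m * δ * ∑ x ∈ F, (2 * ρ x) ^ (m - 1) := by rw [Finset.mul_sum]
        _ ≤ τ * vb m * δ * C1 := by gcongr
        _ = δ * (τ * vb m * C1) := by ring
        _ ≤ δ * (τ * vb m * C1 + 1) := by gcongr; linarith
        _ ≤ η₀ / 2 := by rwa [le_div_iff₀ (by positivity)] at hδ₀
    have hT := humin u' hu' (by linarith)
    have hgain : ∑ x ∈ F, c * ρ x ^ (m - 1) ≤
        ∑ x ∈ F, ((∫ y, ζ x y * ‖fderiv ℝ u y‖) - ∫ y, u y * ‖fderiv ℝ (ζ x) y‖) := by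
      refine Finset.sum_le_sum fun x hx => ?_
      exact gain hm hC hM hiso hu hW hf (hpos x hx) (hζ x hx) hτ
        (le_trans (by linarith) (hηF x hx)) (hρ x (hF hx)).2.2.1 (hρ x (hF hx)).2.2.2
    rw [← Finset.mul_sum] at hgain
    simp_rw [mul_pow]
    rw [← Finset.mul_sum]
    gcongr
    rw [le_div_iff₀ hc0]
    linarith
  have hlim : Tendsto (fun ε : ℝ => ENNReal.ofReal (8 ^ (m - 1) * (2 ^ (m - 1) * (ε / c))))
      (𝓝[>] 0) (𝓝 0) := by
    have h1 : Continuous (fun ε : ℝ => ENNReal.ofReal (8 ^ (m - 1) * (2 ^ (m - 1) * (ε / c)))) :=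
      ENNReal.continuous_ofReal.comp (by fun_prop)
    have := (h1.tendsto 0).mono_left (nhdsWithin_le_nhds (s := Ioi 0))
    simpa using this
  have := ge_of_tendsto hlim (eventually_mem_nhdsWithin.mono fun ε hε => main ε hε)
  exact le_antisymm this zero_le

/-- mollification -/
def mol {m : ℕ} {E : Type} [NormedAddCommGroup E] [NormedSpace ℝ E] (ρ : Euc m → ℝ)
    (g : Euc m → E) (x : Euc m) : E := ∫ t, ρ (x - t) • g t

/-- mollifying kernels -/
structure Ker {m : ℕ} (ρ : Euc m → ℝ) : Prop where
  cd : ContDiff ℝ 1 ρ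
  cs : HasCompactSupport ρ
  nonneg : ∀ x, 0 ≤ ρ x
  even : ∀ x, ρ (-x) = ρ x
  int : ∫ x, ρ x = 1

lemma mol_conv {m : ℕ} {E : Type} [NormedAddCommGroup E] [NormedSpace ℝ E] (ρ : Euc m → ℝ)
    (g : Euc m → E) : mol ρ g =
      convolution g ρ (ContinuousLinearMap.lsmul ℝ ℝ : ℝ →L[ℝ] E →L[ℝ] E).flip volume := by
  ext x; rfl

section
variable {m : ℕ} {E : Type} [NormedAddCommGroup E] [NormedSpace ℝ E]
  {ρ : Euc m → ℝ} {g : Euc m → E}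

lemma mol_cd (hρ : Ker ρ) (hg : LocallyIntegrable g) : ContDiff ℝ 1 (mol ρ g) := by
  rw [mol_conv]
  exact hρ.cs.contDiff_convolution_right (n := 1) _ hg hρ.cd

lemma mol_cs (hρ : Ker ρ) (hg : HasCompactSupport g) : HasCompactSupport (mol ρ g) := by
  rw [mol_conv]
  exact hg.convolution _ hρ.cs

lemma mol_fderiv (hρ : Ker ρ) (hg : LocallyIntegrable g) (x v : Euc m) :
    fderiv ℝ (mol ρ g) x v = ∫ t, fderiv ℝ ρ (x - t) v • g t := by
  rw [mol_conv, (hρ.cs.hasFDerivAt_convolution_right _ hg hρ.cd x).fderiv,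
    convolution_precompR_apply _ hg (hρ.cs.fderiv ℝ) (hρ.cd.continuous_fderiv one_ne_zero)]
  rfl

lemma Ker.int_shift (hρ : Ker ρ) (x : Euc m) : ∫ t, ρ (x - t) = 1 := by
  rw [integral_sub_left_eq_self]; exact hρ.int

lemma Ker.integrable_shift (hρ : Ker ρ) (x : Euc m) : Integrable fun t => ρ (x - t) :=
  (hρ.cd.continuous.integrable_of_hasCompactSupport hρ.cs).comp_sub_left x

lemma mol_norm (hρ : Ker ρ) (hg : ∀ x, ‖g x‖ ≤ 1) (x : Euc m) : ‖mol ρ g x‖ ≤ 1 := by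
  rw [← hρ.int_shift x]
  refine norm_integral_le_of_norm_le (hρ.integrable_shift x) (Eventually.of_forall fun t => ?_)
  rw [norm_smul, Real.norm_of_nonneg (hρ.nonneg _)]
  exact mul_le_of_le_one_right (hρ.nonneg _) (hg t)

lemma Ker.fderiv_odd (hρ : Ker ρ) (x v : Euc m) : fderiv ℝ ρ (-x) v = - fderiv ℝ ρ x v := by
  have h : (fun x => ρ (-x)) = ρ := funext hρ.even
  have h2 : HasFDerivAt (fun x => ρ (-x)) ((fderiv ℝ ρ (-x)).comp
      (-ContinuousLinearMap.id ℝ (Euc m))) x :=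
    (hρ.cd.differentiable one_ne_zero (-x)).hasFDerivAt.comp x (hasFDerivAt_id x).neg
  rw [h] at h2
  rw [h2.fderiv]; simp
end

lemma mol_div {m : ℕ} {ρ : Euc m → ℝ} (hρ : Ker ρ) {V : Set (Euc m)} (hV : MeasurableSet V)
    (hf : volume V ≠ ⊤) {ψ : Euc m → Euc m} (hψ : Continuous ψ) (hψc : HasCompactSupport ψ) :
    ∫ x in V, pdiv (mol ρ ψ) x =
      - ∫ y, fderiv ℝ (mol ρ (V.indicator (1 : Euc m → ℝ))) y (ψ y) := by
  have hχ := int_ind hV hf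
  have hψi : Integrable ψ := hψ.integrable_of_hasCompactSupport hψc
  have hψl := hψi.locallyIntegrable
  have hd : Continuous (fderiv ℝ ρ) := hρ.cd.continuous_fderiv one_ne_zero
  set e : Fin m → Euc m := fun i => EuclideanSpace.single i (1 : ℝ) with he
  have hde : ∀ i, Continuous fun x => fderiv ℝ ρ x (e i) := fun i => hd.clm_apply continuous_const
  have hdc : ∀ i, HasCompactSupport fun x => fderiv ℝ ρ x (e i) := fun i =>
    hρ.cs.fderiv_apply ℝ (e i)
  have hbd : ∀ i, ∃ C, ∀ x, ‖fderiv ℝ ρ x (e i)‖ ≤ C := fun i =>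
    (hdc i).exists_bound_of_continuous (hde i)
  -- the components
  have hψe : ∀ i, Integrable fun y => ψ y i := fun i => by
    have hc : Continuous fun y => ψ y i := (EuclideanSpace.proj (𝕜 := ℝ) i).continuous.comp hψ
    exact hc.integrable_of_hasCompactSupport (hψc.comp_left (g := fun z : Euc m => z i) rfl)
  have hI : ∀ i, Integrable (fun p : Euc m × Euc m =>
      fderiv ℝ ρ (p.1 - p.2) (e i) * (V.indicator (1 : Euc m → ℝ) p.1 * ψ p.2 i))
      (volume.prod volume) := fun i => by
    obtain ⟨C, hC⟩ := hbd i
    refine (hχ.mul_prod (hψe i)).bdd_mul (c := C) ?_ (Eventually.of_forall fun p => hC _)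
    exact ((hde i).comp (continuous_fst.sub continuous_snd)).aestronglyMeasurable
  have h1 : ∀ x, pdiv (mol ρ ψ) x = ∑ i, ∫ y, fderiv ℝ ρ (x - y) (e i) * ψ y i := by
    intro x
    unfold pdiv
    refine Finset.sum_congr rfl fun i _ => ?_
    rw [mol_fderiv hρ hψl, real_inner_comm, ← integral_inner]
    · refine integral_congr_ae (Eventually.of_forall fun y => ?_)
      simp [he, inner_smul_right, EuclideanSpace.inner_single_left]
    · obtain ⟨C, hC⟩ := hbd i
      exact hψi.bdd_smul C
        ((hde i).comp (continuous_const.sub continuous_id)).aestronglyMeasurable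
        (Eventually.of_forall fun p => hC _)
  have h2 : ∀ y, fderiv ℝ (mol ρ (V.indicator (1 : Euc m → ℝ))) y (ψ y) =
      - ∑ i, ∫ x, fderiv ℝ ρ (x - y) (e i) * (V.indicator (1 : Euc m → ℝ) x * ψ y i) := by
    intro y
    have : ψ y = ∑ i, ψ y i • e i := by
      ext j
      simp [he, Finset.sum_apply, Pi.single_apply]
    rw [this, map_sum, ← Finset.sum_neg_distrib]
    refine Finset.sum_congr rfl fun i _ => ?_
    rw [map_smul, mol_fderiv hρ hχ.locallyIntegrable, ← this, smul_eq_mul, ← integral_const_mul,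
      ← integral_neg]
    refine integral_congr_ae (Eventually.of_forall fun x => ?_)
    have := hρ.fderiv_odd (x - y) (e i)
    rw [neg_sub] at this
    simp only [this, smul_eq_mul]; ring
  simp_rw [h2]
  rw [integral_neg, neg_neg, ← integral_indicator hV, integral_finsetSum]
  · have h3 : ∀ x, V.indicator (fun x => pdiv (mol ρ ψ) x) x =
        ∑ i, ∫ y, fderiv ℝ ρ (x - y) (e i) * (V.indicator (1 : Euc m → ℝ) x * ψ y i) := by
      intro x
      by_cases hx : x ∈ V
      · simp only [indicator_of_mem hx, h1, Pi.one_apply, one_mul]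
      · simp [indicator_of_notMem hx]
    simp_rw [h3]
    rw [integral_finsetSum]
    · refine Finset.sum_congr rfl fun i _ => ?_
      exact integral_integral_swap (hI i)
    · exact fun i _ => (hI i).integral_prod_left
  · exact fun i _ => (hI i).integral_prod_right

set_option maxHeartbeats 1000000 in
lemma mol_TV {m : ℕ} {ρ : Euc m → ℝ} (hρ : Ker ρ) {V : Set (Euc m)} (hV : MeasurableSet V)
    (hb : Bornology.IsBounded V) {P : ℝ} (hP0 : 0 ≤ P)
    (hP : perimeter V univ ≤ ENNReal.ofReal P) :
    TV (mol ρ (V.indicator (1 : Euc m → ℝ))) ≤ P := by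
  have hf : volume V ≠ ⊤ := hb.measure_lt_top.ne
  have hχ := int_ind hV hf
  set u := mol ρ (V.indicator (1 : Euc m → ℝ)) with hu
  have hχc : HasCompactSupport (V.indicator (1 : Euc m → ℝ)) :=
    HasCompactSupport.of_support_subset_isCompact hb.isCompact_closure
      (support_indicator_subset.trans subset_closure)
  have ucd : ContDiff ℝ 1 u := mol_cd hρ hχ.locallyIntegrable
  have ucs : HasCompactSupport u := mol_cs hρ hχc
  have ucf : Continuous (fderiv ℝ u) := ucd.continuous_fderiv one_ne_zero
  have ufc : HasCompactSupport (fderiv ℝ u) := ucs.fderiv ℝ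
  set G : Euc m → Euc m := fun x => (InnerProductSpace.toDual ℝ (Euc m)).symm (fderiv ℝ u x) with hG
  have Gc : Continuous G := (InnerProductSpace.toDual ℝ (Euc m)).symm.continuous.comp ucf
  have Gn : ∀ x, ‖G x‖ = ‖fderiv ℝ u x‖ := fun x => by simp [hG]
  have Ga : ∀ x, fderiv ℝ u x (G x) = ‖G x‖ ^ 2 := fun x => by
    rw [← real_inner_self_eq_norm_sq]
    rw [hG]; simp only [InnerProductSpace.toDual_symm_apply]
  have Gcs : HasCompactSupport G := ufc.comp_left (map_zero _)
  set K := tsupport G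
  have hK : volume K ≠ ⊤ := Gcs.isCompact.measure_lt_top.ne
  have Gi : Integrable fun x => ‖G x‖ := (Gc.integrable_of_hasCompactSupport Gcs).norm
  have main : ∀ ε : ℝ, 0 < ε → TV u ≤ P + ε * volume.real K := by
    intro ε hε
    set s : Euc m → ℝ := fun x => √(‖G x‖ ^ 2 + ε ^ 2) with hs
    have spos : ∀ x, 0 < s x := fun x => Real.sqrt_pos.2 (by positivity)
    have sG : ∀ x, ‖G x‖ ≤ s x := fun x => Real.le_sqrt_of_sq_le (by nlinarith)
    have sG' : ∀ x, s x ≤ ‖G x‖ + ε := fun x =>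
      Real.sqrt_le_iff.2 ⟨by positivity, by nlinarith [norm_nonneg (G x)]⟩
    have sc : Continuous s := by fun_prop
    set ψ : Euc m → Euc m := fun x => (-(s x)⁻¹) • G x with hψ
    have sic : Continuous fun x => -(s x)⁻¹ := (sc.inv₀ fun x => (spos x).ne').neg
    have ψc : Continuous ψ := sic.smul Gc
    have ψcs : HasCompactSupport ψ := Gcs.mono (by
      intro x hx hx0
      apply hx
      change (-(s x)⁻¹) • G x = 0
      rw [hx0, smul_zero])
    have ψn : ∀ x, ‖ψ x‖ ≤ 1 := fun x => by
      rw [hψ]; simp only [norm_smul, norm_neg, norm_inv]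
      rw [Real.norm_of_nonneg (spos x).le, inv_mul_le_iff₀ (spos x), mul_one]
      exact sG x
    have h1 : ENNReal.ofReal (∫ x in V, pdiv (mol ρ ψ) x) ≤ ENNReal.ofReal P := by
      refine le_trans ?_ hP
      unfold perimeter
      refine le_iSup_of_le (mol ρ ψ) (le_iSup_of_le (mol_cd hρ
        (ψc.integrable_of_hasCompactSupport ψcs).locallyIntegrable) (le_iSup_of_le
          (mol_cs hρ ψcs) (le_iSup_of_le (subset_univ _) (le_iSup_of_le (mol_norm hρ ψn) le_rfl))))
    rw [ENNReal.ofReal_le_ofReal_iff hP0, mol_div hρ hV hf ψc ψcs, ← integral_neg] at h1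
    have h2 : ∀ y, - fderiv ℝ u y (ψ y) = (s y)⁻¹ * ‖G y‖ ^ 2 := fun y => by
      rw [hψ]; simp only [map_smul, Ga, smul_eq_mul]; ring
    have h3 : Integrable fun y => - fderiv ℝ u y (ψ y) := by
      refine (Continuous.integrable_of_hasCompactSupport (ucf.clm_apply ψc) ?_).neg
      exact ψcs.mono (by
        intro x hx hx0
        apply hx; simp only [hx0, map_zero])
    have h4 : TV u - ε * volume.real K ≤ ∫ y, - fderiv ℝ u y (ψ y) := by
      have e1 : TV u = ∫ x, ‖G x‖ := by unfold TV; simp_rw [Gn]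
      have hKm : MeasurableSet K := (isClosed_tsupport G).measurableSet
      have hKi : Integrable (K.indicator fun _ => ε) :=
        (integrable_indicator_iff hKm).2 (integrableOn_const hK)
      have e2 : ε * volume.real K = ∫ x, K.indicator (fun _ => ε) x := by
        rw [integral_indicator hKm, setIntegral_const, smul_eq_mul, mul_comm]
      rw [e1, e2, ← integral_sub Gi hKi]
      refine integral_mono (Gi.sub hKi) h3 fun y => ?_
      simp only [h2]
      by_cases hy : y ∈ K
      · rw [indicator_of_mem hy, ← div_eq_inv_mul, le_div_iff₀ (spos y)]
        have := sG' y
        have := spos y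
        by_cases hh : ‖G y‖ ≤ ε
        · nlinarith [sq_nonneg ‖G y‖]
        · nlinarith [sq_nonneg ‖G y‖]
      · rw [indicator_of_notMem hy, image_eq_zero_of_notMem_tsupport hy]; simp
    linarith
  refine le_of_forall_pos_le_add fun δ hδ => ?_
  have hk : 0 ≤ volume.real K := measureReal_nonneg
  refine (main (δ / (volume.real K + 1)) (by positivity)).trans ?_
  have : δ / (volume.real K + 1) * volume.real K ≤ δ := by
    rw [div_mul_eq_mul_div, div_le_iff₀ (by positivity)]; nlinarith
  linarith

lemma approx_smooth {m : ℕ} {V : Set (Euc m)} (hV : MeasurableSet V)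
    (hb : Bornology.IsBounded V) {P : ℝ} (hP0 : 0 ≤ P)
    (hP : perimeter V univ ≤ ENNReal.ofReal P) : Approx V P := by
  have hf : volume V ≠ ⊤ := hb.measure_lt_top.ne
  have hχ := int_ind hV hf
  set χ : Euc m → ℝ := V.indicator (1 : Euc m → ℝ) with hχdef
  have hχ0 : ∀ x, 0 ≤ χ x := fun x => indicator_nonneg (fun _ _ => zero_le_one) x
  have hχ1 : ∀ x, ‖χ x‖ ≤ 1 := fun x => by
    rw [Real.norm_of_nonneg (hχ0 x)]
    exact indicator_le_self' (fun _ _ => zero_le_one) x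
  have hχc : HasCompactSupport χ :=
    HasCompactSupport.of_support_subset_isCompact hb.isCompact_closure
      (support_indicator_subset.trans subset_closure)
  let b : ℕ → ContDiffBump (0 : Euc m) := fun n =>
    ⟨1 / (n + 1) / 2, 1 / (n + 1), by positivity, half_lt_self (by positivity)⟩
  have hk : ∀ n, Ker ((b n).normed volume) := fun n =>
    ⟨(b n).contDiff_normed (n := 1), (b n).hasCompactSupport_normed, (b n).nonneg_normed,
      (b n).normed_neg, (b n).integral_normed⟩
  have hadm : ∀ n, Adm (mol ((b n).normed volume) χ) := fun n => by
    have h0 : ∀ x, 0 ≤ mol ((b n).normed volume) χ x := fun x =>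
      integral_nonneg fun t => smul_nonneg ((hk n).nonneg _) (hχ0 t)
    refine ⟨mol_cd (hk n) hχ.locallyIntegrable, mol_cs (hk n) hχc, h0, fun x => ?_⟩
    have := mol_norm (hk n) hχ1 x
    rwa [Real.norm_of_nonneg (h0 x)] at this
  -- L1 convergence
  have hae := ContDiffBump.ae_convolution_tendsto_right_of_locallyIntegrable (μ := volume)
    (φ := b) (l := atTop) (K := 2) (g := χ) tendsto_one_div_add_atTop_nhds_zero_nat
    (Eventually.of_forall fun n => by
      change 1 / ((n : ℝ) + 1) ≤ 2 * (1 / (n + 1) / 2); linarith) hχ.locallyIntegrable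
  have hconv : Tendsto (fun n => L1d (mol ((b n).normed volume) χ) V) atTop (𝓝 0) := by
    set B := cthickening 1 V with hB
    have hBm : MeasurableSet B := isClosed_cthickening.measurableSet
    have hBf : volume B ≠ ⊤ := hb.cthickening.measure_lt_top.ne
    have := tendsto_integral_of_dominated_convergence (μ := volume) (B.indicator (1 : Euc m → ℝ))
      (F := fun n x => |mol ((b n).normed volume) χ x - χ x|) (f := fun _ => (0 : ℝ))
      (fun n => ((hadm n).int_diff hV hf).aestronglyMeasurable) (int_ind hBm hBf) ?_ ?_
    · simpa [L1d] using this
    · refine fun n => Eventually.of_forall fun x => ?_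
      rw [norm_abs_eq_norm]
      by_cases hx : x ∈ B
      · rw [indicator_of_mem hx, Pi.one_apply, Real.norm_eq_abs, abs_le]
        have h1 := (hadm n).nonneg x
        have h2 := (hadm n).le_one x
        have h3 := hχ0 x
        have h4 := hχ1 x
        rw [Real.norm_of_nonneg h3] at h4
        constructor <;> linarith
      · rw [indicator_of_notMem hx]
        have e1 : χ x = 0 := indicator_of_notMem (fun h => hx (self_subset_cthickening V h)) _
        have e2 : mol ((b n).normed volume) χ x = 0 := by
          unfold mol
          rw [← integral_zero (Euc m) ℝ]
          refine integral_congr_ae (Eventually.of_forall fun t => ?_)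
          by_cases ht : t ∈ V
          · have : (b n).normed volume (x - t) = 0 := by
              by_contra hne
              have h5 : x - t ∈ Function.support ((b n).normed volume) := hne
              rw [(b n).support_normed_eq, mem_ball_zero_iff] at h5
              have h6 : (b n).rOut ≤ 1 := by
                change 1 / ((n : ℝ) + 1) ≤ 1
                rw [div_le_one (by positivity)]; linarith [n.cast_nonneg (α := ℝ)]
              apply hx
              refine mem_cthickening_of_dist_le x t 1 V ht ?_
              rw [dist_eq_norm]; linarith
            simp [this]
          · have : χ t = 0 := indicator_of_notMem ht _
            simp [this]
        rw [e1, e2]; simp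
    · filter_upwards [hae] with x hx
      have e : ∀ n, convolution ((b n).normed volume) χ (ContinuousLinearMap.lsmul ℝ ℝ) volume x
          = mol ((b n).normed volume) χ x := fun n => by
        rw [mol_conv, convolution_flip]
      simp_rw [e] at hx
      have := (hx.sub_const (χ x)).abs
      simpa using this
  intro η hη
  obtain ⟨n, hn⟩ := (hconv.eventually (gt_mem_nhds hη)).exists
  exact ⟨_, hadm n, hn.le, mol_TV (hk n) hV hb hP0 hP⟩

lemma smooth_dens {m : ℕ} {V : Set (Euc m)} (hV : IsSmoothSet V) {x : Euc m} (hx : x ∉ V) :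
    ∀ᶠ i : ℕ in atTop, dens V x ((1 / 2) ^ i) ≤ 1 - (1 / 4) ^ m := by
  obtain ⟨hVo, hVb, hVs⟩ := hV
  have hpow : Tendsto (fun i : ℕ => (1 / 2 : ℝ) ^ i) atTop (𝓝 0) :=
    tendsto_pow_atTop_nhds_zero_of_lt_one (by norm_num) (by norm_num)
  by_cases hcl : x ∈ closure V
  swap
  · obtain ⟨δ, hδ, hδV⟩ := Metric.isOpen_iff.1 isClosed_closure.isOpen_compl x hcl
    filter_upwards [hpow.eventually (gt_mem_nhds hδ)] with i hi
    have : V ∩ closedBall x ((1 / 2) ^ i) = ∅ := by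
      ext y
      simp only [mem_inter_iff, mem_empty_iff_false, iff_false, not_and]
      intro hy hy2
      exact hδV (closedBall_subset_ball hi hy2) (subset_closure hy)
    unfold dens
    rw [this]
    simp only [measureReal_empty, zero_div, sub_nonneg]
    exact pow_le_one₀ (by norm_num) (by norm_num)
  have hfr : x ∈ frontier V := by rw [hVo.frontier_eq]; exact ⟨hcl, hx⟩
  obtain ⟨W, f, hWo, hxW, hf, hf0, hVW⟩ := hVs x hfr
  have hfx : 0 ≤ f x := by
    by_contra h
    exact hx (hVW.symm.subset ⟨not_le.1 h, hxW⟩).1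
  set L := fderiv ℝ f x with hL
  have hLn : 0 < ‖L‖ := norm_pos_iff.2 (hf0 x hxW)
  set G : Euc m := (InnerProductSpace.toDual ℝ (Euc m)).symm L with hG
  have Gn : ‖G‖ = ‖L‖ := LinearIsometryEquiv.norm_map _ _
  have LG : L G = ‖L‖ ^ 2 := by
    rw [← Gn, ← real_inner_self_eq_norm_sq, hG]; simp only [InnerProductSpace.toDual_symm_apply]
  set w : Euc m := ‖L‖⁻¹ • G with hw
  have wn : ‖w‖ = 1 := by
    rw [hw, norm_smul, norm_inv, norm_norm, Gn, inv_mul_cancel₀ hLn.ne']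
  have Lw : L w = ‖L‖ := by
    rw [hw, map_smul, LG, smul_eq_mul]; field_simp
  have hd : HasFDerivAt f L x := (hf.differentiable (by simp) x).hasFDerivAt
  have hlo := hd.isLittleO.def (show 0 < ‖L‖ / 8 by positivity)
  have hev : ∀ᶠ y in 𝓝 x, y ∈ W ∧ ‖f y - f x - L (y - x)‖ ≤ ‖L‖ / 8 * ‖y - x‖ :=
    (hWo.eventually_mem hxW).and hlo
  obtain ⟨δ, hδ, hball⟩ := Metric.eventually_nhds_iff_ball.1 hev
  filter_upwards [hpow.eventually (gt_mem_nhds hδ)] with i hi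
  set r : ℝ := (1 / 2) ^ i with hr
  have hrp : 0 < r := by positivity
  set z : Euc m := x + (r / 2) • w with hz
  have hzx : ∀ y ∈ closedBall z (r / 4), ‖y - x‖ ≤ 3 / 4 * r := by
    intro y hy
    have e : y - x = (y - z) + (r / 2) • w := by rw [hz]; abel
    rw [e]
    refine (norm_add_le _ _).trans ?_
    rw [norm_smul, wn, Real.norm_of_nonneg (by positivity)]
    rw [mem_closedBall, dist_eq_norm] at hy
    linarith
  have hsub : closedBall z (r / 4) ⊆ closedBall x r := by
    intro y hy
    have := hzx y hy
    rw [mem_closedBall, dist_eq_norm]; linarith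
  have hdis : Disjoint (V ∩ closedBall x r) (closedBall z (r / 4)) := by
    rw [Set.disjoint_left]
    rintro y ⟨hyV, -⟩ hy
    have h1 := hzx y hy
    obtain ⟨hyW, h2⟩ := hball y (by rw [mem_ball, dist_eq_norm]; linarith)
    have h3 : f y < 0 := (hVW.subset ⟨hyV, hyW⟩).1
    have h4 : L (y - x) = L (y - z) + r / 2 * ‖L‖ := by
      have e : y - x = (y - z) + (r / 2) • w := by rw [hz]; abel
      rw [e, map_add, map_smul, Lw, smul_eq_mul]
    have h5 : |L (y - z)| ≤ ‖L‖ * (r / 4) := by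
      rw [mem_closedBall, dist_eq_norm] at hy
      exact (L.le_opNorm _).trans (by gcongr)
    have h6 := (abs_le.1 h5).1
    have h7 := (abs_le.1 h2).1
    have h8 : ‖L‖ / 8 * ‖y - x‖ ≤ ‖L‖ / 8 * (3 / 4 * r) := by gcongr
    have h9 : 0 < ‖L‖ * r := by positivity
    nlinarith
  have hvol : volume.real (V ∩ closedBall x r) + volume.real (closedBall z (r / 4)) ≤
      volume.real (closedBall x r) := by
    rw [← measureReal_union hdis measurableSet_closedBall
      (measure_ne_top_of_subset inter_subset_right measure_closedBall_lt_top.ne)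
      measure_closedBall_lt_top.ne]
    exact measureReal_mono (union_subset inter_subset_right hsub) measure_closedBall_lt_top.ne
  rw [vol_ball z (by positivity), vol_ball x hrp.le] at hvol
  unfold dens
  rw [div_le_iff₀ (mul_pos (vb_pos m) (by positivity))]
  have e : (r / 4) ^ m = (1 / 4) ^ m * r ^ m := by rw [← mul_pow]; congr 1; ring
  rw [e] at hvol
  linarith

lemma dens_compl {m : ℕ} {W : Set (Euc m)} (hW : MeasurableSet W) (x : Euc m) {r : ℝ}
    (hr : 0 < r) : dens Wᶜ x r = 1 - dens W x r := by
  have hv := vb_pos m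
  have h : volume.real (closedBall x r ∩ W) + volume.real (closedBall x r \ W) =
      volume.real (closedBall x r) :=
    measureReal_inter_add_sdiff hW measure_closedBall_lt_top.ne
  rw [vol_ball x hr.le] at h
  unfold dens
  rw [inter_comm Wᶜ, ← sdiff_eq, inter_comm W]
  field_simp
  linarith

lemma down {m : ℕ} {W : Set (Euc m)} (hW : MeasurableSet W) {κ : ℝ} (hκ2 : 2 ^ m * κ ≤ 1 / 2)
    (hκ4 : κ ≤ 1 / 4) (x : Euc m) (i₁ : ℕ) (h1 : κ ≤ dens W x ((1 / 2) ^ i₁))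
    (h2 : ∃ i, i₁ ≤ i ∧ dens W x ((1 / 2) ^ i) ≤ 1 - κ) :
    ∃ i, i₁ ≤ i ∧ κ ≤ dens W x ((1 / 2) ^ i) ∧ dens W x ((1 / 2) ^ i) ≤ 1 - κ := by
  classical
  obtain ⟨hi1, hi2⟩ := Nat.find_spec h2
  have hmin := fun j => Nat.find_min h2 (m := j)
  set i := Nat.find h2
  refine ⟨i, hi1, ?_, hi2⟩
  rcases hi1.eq_or_lt with h | h
  · rwa [← h]
  · obtain ⟨j, hj⟩ : ∃ j, i = j + 1 := ⟨i - 1, by omega⟩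
    have h3 : 1 - κ < dens W x ((1 / 2) ^ j) := by
      by_contra hcon
      exact hmin j (by omega) ⟨by omega, not_lt.1 hcon⟩
    have h4 := dens_mono Wᶜ x (r := (1 / 2) ^ i) (s := (1 / 2) ^ j) (by positivity)
      (pow_le_pow_of_le_one (by norm_num) (by norm_num) (by omega))
      (by rw [hj, pow_succ]; linarith)
    rw [dens_compl hW x (by positivity), dens_compl hW x (by positivity)] at h4
    have h5 : (2 : ℝ) ^ m * (1 - dens W x ((1 / 2) ^ j)) ≤ 2 ^ m * κ := by
      gcongr; linarith
    linarith

lemma caseG {m : ℕ} (hm : 0 < m) {W : Set (Euc m)} (hW : MeasurableSet W)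
    (hf : volume W ≠ ⊤) {P : ℝ} (hA : Approx W P) {κ : ℝ} (hκ : 0 < κ)
    (hκ2 : 2 ^ m * κ ≤ 1 / 2) (hκ4 : κ ≤ 1 / 4) :
    (μH[(m : ℝ) - 1] : Measure (Euc m)) {x | (∃ᶠ i : ℕ in atTop, κ ≤ dens W x ((1 / 2) ^ i)) ∧
      ∃ᶠ i : ℕ in atTop, dens W x ((1 / 2) ^ i) ≤ 1 - κ} < ⊤ := by
  set S := {x | (∃ᶠ i : ℕ in atTop, κ ≤ dens W x ((1 / 2) ^ i)) ∧
      ∃ᶠ i : ℕ in atTop, dens W x ((1 / 2) ^ i) ≤ 1 - κ} with hS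
  refine (cov hm S (4 * 2 ^ m / (κ ^ 2 * vb m) * P) 1 one_pos ?_).trans_lt ENNReal.ofReal_lt_top
  intro δ hδ _
  obtain ⟨N, hN⟩ := exists_pow_lt_of_lt_one hδ (show (1/2 : ℝ) < 1 by norm_num)
  have hex : ∀ x, ∃ i : ℕ, x ∈ S → N ≤ i ∧ κ ≤ dens W x ((1 / 2) ^ i) ∧
      dens W x ((1 / 2) ^ i) ≤ 1 - κ := by
    intro x
    by_cases hx : x ∈ S
    · obtain ⟨i₁, h1, h2⟩ := frequently_atTop.1 hx.1 N
      obtain ⟨i, h3, h4⟩ := down hW hκ2 hκ4 x i₁ h2 (frequently_atTop.1 hx.2 i₁)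
      exact ⟨i, fun _ => ⟨h1.trans h3, h4⟩⟩
    · exact ⟨0, fun h => absurd h hx⟩
  choose i hi using hex
  refine ⟨fun x => (1 / 2) ^ i x, fun x hx => ⟨by positivity, ?_⟩, fun F hF hd => ?_⟩
  · exact (pow_le_pow_of_le_one (by norm_num) (by norm_num) (hi x hx).1).trans hN.le
  · exact fin_bound hm hW hf hA hκ F _ (fun x _ => by positivity) hd
      (fun x hx => (hi x (hF hx)).2.1) (fun x hx => (hi x (hF hx)).2.2)

lemma caseE {m : ℕ} (hm : 0 < m) {ι : Type} {O : Set (Euc m)}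
    (hO : volume O ≠ ⊤) (V : ι → Set (Euc m))
    (hV : ∀ α, MeasurableSet (V α)) (hVO : ∀ α, V α ⊆ O) {P : ℝ} (hA : ∀ α, Approx (V α) P)
    (hc : ∀ η > 0, ∃ α, volume.real (O \ V α) ≤ η) {κ : ℝ} (hκ : 0 < κ)
    (hκ2 : 2 ^ m * κ ≤ 1 / 2) (hκ4 : κ ≤ 1 / 4) :
    (μH[(m : ℝ) - 1] : Measure (Euc m))
      {x | (∀ α, ∀ᶠ i : ℕ in atTop, dens (V α) x ((1 / 2) ^ i) ≤ 1 - κ) ∧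
        ∀ᶠ i : ℕ in atTop, 1 - κ < dens O x ((1 / 2) ^ i)} < ⊤ := by
  have hvb := vb_pos m
  let S : ℕ → Set (Euc m) := fun j =>
    {x | (∀ α, ∀ᶠ i : ℕ in atTop, dens (V α) x ((1 / 2) ^ i) ≤ 1 - κ) ∧
        ∀ i ≥ j, 1 - κ < dens O x ((1 / 2) ^ i)}
  have hSm : Monotone S := fun j k hjk x hx => ⟨hx.1, fun i hi => hx.2 i (hjk.trans hi)⟩
  have hSu : {x | (∀ α, ∀ᶠ i : ℕ in atTop, dens (V α) x ((1 / 2) ^ i) ≤ 1 - κ) ∧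
        ∀ᶠ i : ℕ in atTop, 1 - κ < dens O x ((1 / 2) ^ i)} = ⋃ j, S j := by
    ext x
    simp only [S, mem_iUnion, mem_ofPred_eq, eventually_atTop, exists_and_left]
  rw [hSu, hSm.measure_iUnion]
  refine lt_of_le_of_lt (iSup_le fun j => ?_)
    (ENNReal.ofReal_lt_top (r := 8 ^ (m - 1) * (4 * 2 ^ m / (κ ^ 2 * vb m) * P)))
  refine cov hm (S j) (4 * 2 ^ m / (κ ^ 2 * vb m) * P) 1 one_pos ?_
  intro δ hδ _
  obtain ⟨N', hN'⟩ := exists_pow_lt_of_lt_one hδ (show (1/2 : ℝ) < 1 by norm_num)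
  set N := max N' j with hNdef
  have hN : (1 / 2 : ℝ) ^ N ≤ δ :=
    (pow_le_pow_of_le_one (by norm_num) (by norm_num) (le_max_left _ _)).trans hN'.le
  obtain ⟨α, hα⟩ := hc (1 / 4 * (vb m * ((1 / 2) ^ N) ^ m)) (by positivity)
  have hex : ∀ x, ∃ i : ℕ, x ∈ S j → N ≤ i ∧ κ ≤ dens (V α) x ((1 / 2) ^ i) ∧
      dens (V α) x ((1 / 2) ^ i) ≤ 1 - κ := by
    intro x
    by_cases hx : x ∈ S j
    · have h1 := hx.2 N (le_max_right _ _)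
      have h2 : κ ≤ dens (V α) x ((1 / 2) ^ N) := by
        have hle : volume.real (O ∩ closedBall x ((1 / 2) ^ N)) ≤
            volume.real (V α ∩ closedBall x ((1 / 2) ^ N)) + volume.real (O \ V α) := by
          refine (measureReal_mono ?_ ?_).trans (measureReal_union_le _ _)
          · rintro y ⟨hy1, hy2⟩
            by_cases hy : y ∈ V α
            · exact Or.inl ⟨hy, hy2⟩
            · exact Or.inr ⟨hy1, hy⟩
          · exact measure_union_ne_top
              (measure_ne_top_of_subset inter_subset_right measure_closedBall_lt_top.ne)
              (measure_ne_top_of_subset sdiff_subset hO)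
        have hp : 0 < vb m * ((1 / 2) ^ N) ^ m := by positivity
        unfold dens at h1 ⊢
        rw [lt_div_iff₀ hp] at h1
        rw [le_div_iff₀ hp]
        nlinarith
      obtain ⟨i₀, h3⟩ := eventually_atTop.1 (hx.1 α)
      obtain ⟨i, h4, h5⟩ := down (hV α) hκ2 hκ4 x N h2
        ⟨max i₀ N, le_max_right _ _, h3 _ (le_max_left _ _)⟩
      exact ⟨i, fun _ => ⟨h4, h5⟩⟩
    · exact ⟨0, fun h => absurd h hx⟩
  choose i hi using hex
  refine ⟨fun x => (1 / 2) ^ i x, fun x hx => ⟨by positivity, ?_⟩, fun F hF hd => ?_⟩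
  · exact (pow_le_pow_of_le_one (by norm_num) (by norm_num) (hi x hx).1).trans hN
  · exact fin_bound hm (hV α) (measure_ne_top_of_subset (hVO α) hO) (hA α) hκ F _
      (fun x _ => by positivity) hd
      (fun x hx => (hi x (hF hx)).2.1) (fun x hx => (hi x (hF hx)).2.2)

lemma ext_of_dyadic {m : ℕ} {O : Set (Euc m)} {x : Euc m}
    (h : ∀ ε > 0, ∀ᶠ i : ℕ in atTop, dens O x ((1 / 2) ^ i) ≤ ε) : x ∈ extMeas O := by
  have hvb := vb_pos m
  have hd : ∀ r : ℝ, 0 < r → volume (O ∩ closedBall x r) / volume (closedBall x r) =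
      ENNReal.ofReal (dens O x r) := by
    intro r hr
    have hp : 0 < vb m * r ^ m := by positivity
    unfold dens
    rw [ENNReal.ofReal_div_of_pos hp, ← vol_ball x hr.le, measureReal_def, measureReal_def,
      ENNReal.ofReal_toReal measure_closedBall_lt_top.ne, ENNReal.ofReal_toReal
        (measure_ne_top_of_subset inter_subset_right measure_closedBall_lt_top.ne)]
  have ht : Tendsto (fun r => dens O x r) (𝓝[>] 0) (𝓝 0) := by
    rw [Metric.tendsto_nhds]
    intro ε hε
    obtain ⟨N, hN⟩ := eventually_atTop.1 (h (ε / 2 ^ m / 2) (by positivity))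
    have : Ioo (0 : ℝ) ((1 / 2) ^ N) ∈ 𝓝[>] (0 : ℝ) := Ioo_mem_nhdsGT (by positivity)
    filter_upwards [this] with r hr
    obtain ⟨n, hn1, hn2⟩ := exists_nat_pow_near_of_lt_one hr.1
      (hr.2.le.trans (pow_le_one₀ (by norm_num) (by norm_num))) (show (0:ℝ) < 1 / 2 by norm_num)
      (by norm_num)
    have hnN : N ≤ n := by
      have : (1 / 2 : ℝ) ^ (n + 1) < (1 / 2) ^ N := hn1.trans hr.2
      rw [pow_lt_pow_iff_right_of_lt_one₀ (by norm_num) (by norm_num)] at this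
      omega
    have h1 := dens_mono O x hr.1 hn2 (by rw [pow_succ] at hn1; linarith)
    have h2 := hN n hnN
    rw [Real.dist_eq, sub_zero, abs_of_nonneg (dens_nonneg O x hr.1.le)]
    calc dens O x r ≤ 2 ^ m * (ε / 2 ^ m / 2) := h1.trans (by gcongr)
      _ = ε / 2 := by field_simp
      _ < ε := by linarith
  have ht2 := ENNReal.tendsto_ofReal ht
  rw [ENNReal.ofReal_zero] at ht2
  refine ht2.congr' ?_
  filter_upwards [self_mem_nhdsWithin] with r hr
  exact (hd r hr).symm

lemma caseL {m : ℕ} {κ : ℝ} (hκ : 0 < κ) {W : Set (Euc m)}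
    (hnull : ∀ τ, 0 < τ → τ ≤ κ → (μH[(m : ℝ) - 1] : Measure (Euc m))
      {x | (∀ᶠ i : ℕ in atTop, dens W x ((1 / 2) ^ i) ≤ τ) ∧
      ∃ᶠ i : ℕ in atTop, τ / 2 < dens W x ((1 / 2) ^ i)} = 0) :
    (μH[(m : ℝ) - 1] : Measure (Euc m))
      {x | (∀ᶠ i : ℕ in atTop, dens W x ((1 / 2) ^ i) ≤ κ) ∧ x ∉ extMeas W} = 0 := by
  classical
  refine measure_mono_null ?_ (measure_iUnion_null fun k : ℕ => hnull (κ / 2 ^ k) (by positivity)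
    (div_le_self hκ.le (one_le_pow₀ one_le_two)))
  rintro x ⟨h1, h2⟩
  have hex : ∃ k : ℕ, ¬ ∀ᶠ i : ℕ in atTop, dens W x ((1 / 2) ^ i) ≤ κ / 2 ^ k := by
    by_contra! hcon
    apply h2
    refine ext_of_dyadic fun ε hε => ?_
    obtain ⟨k, hk⟩ := exists_pow_lt_of_lt_one (show 0 < ε / κ by positivity)
      (show (1/2 : ℝ) < 1 by norm_num)
    filter_upwards [hcon k] with i hi
    refine hi.trans ?_
    rw [lt_div_iff₀ hκ, one_div, inv_pow] at hk
    rw [div_eq_inv_mul]; exact hk.le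
  have hs := Nat.find_spec hex
  have hmin := fun j => Nat.find_min hex (m := j)
  set k := Nat.find hex
  have hk0 : k ≠ 0 := fun h => by rw [h] at hs; simp at hs; exact absurd h1 (by simpa using hs)
  obtain ⟨j, hj⟩ : ∃ j, k = j + 1 := ⟨k - 1, by omega⟩
  have h3 := not_not.1 (hmin j (by omega))
  refine mem_iUnion.2 ⟨j, h3, ?_⟩
  rw [hj, not_eventually] at hs
  refine hs.mono fun i hi => ?_
  rw [not_le, pow_succ, ← div_div] at hi
  exact hi

lemma approx_union {m : ℕ} {ι : Type} {O : Set (Euc m)} (hOm : MeasurableSet O)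
    (hO : volume O ≠ ⊤) (V : ι → Set (Euc m))
    (hV : ∀ α, MeasurableSet (V α)) (hVO : ∀ α, V α ⊆ O) {P : ℝ} (hA : ∀ α, Approx (V α) P)
    (hc : ∀ η > 0, ∃ α, volume.real (O \ V α) ≤ η) : Approx O P := by
  intro η hη
  obtain ⟨α, hα⟩ := hc (η / 2) (by positivity)
  obtain ⟨u, hu, hu1, hu2⟩ := hA α (η / 2) (by positivity)
  refine ⟨u, hu, ?_, hu2⟩
  have hVf : volume (V α) ≠ ⊤ := measure_ne_top_of_subset (hVO α) hO
  have hDm : MeasurableSet (O \ V α) := hOm.diff (hV α)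
  have hDf : volume (O \ V α) ≠ ⊤ := measure_ne_top_of_subset sdiff_subset hO
  have e : volume.real (O \ V α) = ∫ x, (O \ V α).indicator (1 : Euc m → ℝ) x := by
    rw [integral_indicator_one hDm]
  have : L1d u O ≤ L1d u (V α) + volume.real (O \ V α) := by
    rw [e]
    unfold L1d
    rw [← integral_add (hu.int_diff (hV α) hVf) (int_ind hDm hDf)]
    refine integral_mono (hu.int_diff hOm hO)
      ((hu.int_diff (hV α) hVf).add (int_ind hDm hDf)) fun x => ?_
    simp only
    by_cases h1 : x ∈ V α
    · have h2 := hVO α h1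
      simp [h1, h2]
    · by_cases h2 : x ∈ O
      · simp only [indicator_of_mem h2, indicator_of_notMem h1,
          indicator_of_mem (show x ∈ O \ V α from ⟨h2, h1⟩), Pi.one_apply]
        have := hu.nonneg x
        have := hu.le_one x
        rw [abs_of_nonpos (by linarith), abs_of_nonneg (by linarith)]
        linarith
      · simp [h1, h2]
  linarith

/-- **Proposition 4.3, first part**: if a set `A` of finite positive Lebesgue measure is
approximated in `L_1(ℝ^m)` by a net of smooth sets compactly contained in `A` with
uniformly bounded perimeter, then the non-exterior boundary `∂A \ ext_* A` has finite
`(m-1)`-dimensional Hausdorff measure. -/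
theorem finite_nonexterior_boundary_of_approximation {m : ℕ} (A : Set (Euc m))
    (h0 : 0 < volume A) (h1 : volume A < ⊤)
    (D : DirIdx) (V : D.ι → Set (Euc m))
    (hsm : ∀ α, IsSmoothSet (V α) ∧ closure (V α) ⊆ A ∧ IsCompact (closure (V α)))
    (hper : (⨆ α, perimeter (V α) Set.univ) < ⊤)
    (hconv : Tendsto (fun α => volume ((V α) ∆ A)) atTop (𝓝 0)) :
    (μH[(m : ℝ) - 1] : Measure (Euc m)) (frontier A \ extMeas A) < ⊤ := by
  rcases Nat.eq_zero_or_pos m with rfl | hm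
  · have hA : frontier A = ∅ := by
      rcases Set.eq_empty_or_nonempty A with h | h
      · rw [h, frontier_empty]
      · rw [Subsingleton.eq_univ_of_nonempty h, frontier_univ]
    rw [hA, empty_sdiff, measure_empty]; exact ENNReal.zero_lt_top
  set P : ℝ := (⨆ α, perimeter (V α) Set.univ).toReal with hPdef
  have hP0 : 0 ≤ P := ENNReal.toReal_nonneg
  have hVo : ∀ α, IsOpen (V α) := fun α => (hsm α).1.1
  have hVm : ∀ α, MeasurableSet (V α) := fun α => (hVo α).measurableSet
  have hVA : ∀ α, V α ⊆ A := fun α => subset_closure.trans (hsm α).2.1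
  have happ : ∀ α, Approx (V α) P := fun α => by
    refine approx_smooth (hVm α) (hsm α).1.2.1 hP0 ?_
    rw [hPdef, ENNReal.ofReal_toReal hper.ne]
    exact le_iSup (fun α => perimeter (V α) Set.univ) α
  set O : Set (Euc m) := ⋃ α, V α with hOdef
  have hOo : IsOpen O := isOpen_iUnion hVo
  have hOm : MeasurableSet O := hOo.measurableSet
  have hOA : O ⊆ A := iUnion_subset hVA
  have hVO : ∀ α, V α ⊆ O := fun α => subset_iUnion V α
  have hOf : volume O ≠ ⊤ := measure_ne_top_of_subset hOA h1.ne
  have hAO : volume (A \ O) = 0 := by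
    refine le_antisymm (ge_of_tendsto' hconv fun α => measure_mono ?_) zero_le
    intro x hx
    exact Or.inr ⟨hx.1, fun h => hx.2 (hVO α h)⟩
  have hc : ∀ η > 0, ∃ α, volume.real (O \ V α) ≤ η := by
    intro η hη
    obtain ⟨α, hα⟩ := (hconv.eventually (gt_mem_nhds (ENNReal.ofReal_pos.2 hη))).exists
    refine ⟨α, ?_⟩
    rw [measureReal_def]
    refine ENNReal.toReal_le_of_le_ofReal hη.le (le_trans (measure_mono ?_) hα.le)
    exact fun x hx => Or.inr ⟨hOA hx.1, hx.2⟩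
  have hext : extMeas O = extMeas A := by
    have : ∀ (x : Euc m) (r : ℝ), volume (O ∩ closedBall x r) = volume (A ∩ closedBall x r) := by
      intro x r
      refine le_antisymm (measure_mono (inter_subset_inter_left _ hOA)) ?_
      calc volume (A ∩ closedBall x r) ≤ volume ((O ∩ closedBall x r) ∪ (A \ O)) := by
            refine measure_mono ?_
            rintro y ⟨hy1, hy2⟩
            by_cases hy : y ∈ O
            · exact Or.inl ⟨hy, hy2⟩
            · exact Or.inr ⟨hy1, hy⟩
        _ ≤ volume (O ∩ closedBall x r) + volume (A \ O) := measure_union_le _ _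
        _ = _ := by rw [hAO, add_zero]
    unfold extMeas
    simp_rw [this]
  have hOP : Approx O P := approx_union hOm hOf V hVm hVO happ hc
  obtain ⟨κ₀, hκ₀, hnull⟩ := L_null hm
  set κ : ℝ := min κ₀ ((1 / 4) ^ m / 4) with hκdef
  have hκ : 0 < κ := lt_min hκ₀ (by positivity)
  have hκa : κ ≤ κ₀ := min_le_left _ _
  have hκb : κ ≤ (1 / 4) ^ m / 4 := min_le_right _ _
  have hq1 : (1 / 4 : ℝ) ^ m ≤ 1 := pow_le_one₀ (by norm_num) (by norm_num)
  have hq0 : (0 : ℝ) < (1 / 4) ^ m := by positivity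
  have hκ4 : κ ≤ 1 / 4 := by linarith
  have hκ2 : 2 ^ m * κ ≤ 1 / 2 := by
    have e : (2 : ℝ) ^ m * (1 / 4) ^ m = (1 / 2) ^ m := by rw [← mul_pow]; norm_num
    have e2 : (1 / 2 : ℝ) ^ m ≤ 1 := pow_le_one₀ (by norm_num) (by norm_num)
    calc (2 : ℝ) ^ m * κ ≤ 2 ^ m * ((1 / 4) ^ m / 4) := by gcongr
      _ = (1 / 2) ^ m / 4 := by rw [← e]; ring
      _ ≤ 1 / 2 := by linarith
  have hG := caseG hm hOm hOf hOP hκ hκ2 hκ4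
  have hE := caseE hm hOf V hVm hVO happ hc hκ hκ2 hκ4
  have hL := caseL (W := O) hκ fun τ hτ hτκ =>
    hnull τ hτ (hτκ.trans hκa) (hτκ.trans (by linarith)) O P hOm hOf hOP
  refine lt_of_le_of_lt (measure_mono ?_) (lt_of_le_of_lt (measure_union_le _ _)
    (ENNReal.add_lt_top.2 ⟨lt_of_le_of_lt (measure_union_le _ _)
      (ENNReal.add_lt_top.2 ⟨hG, hE⟩), hL.trans_lt ENNReal.zero_lt_top⟩))
  rintro x ⟨hxf, hxe⟩
  rw [← hext] at hxe
  have hxV : ∀ α, x ∉ V α := fun α h => hxf.2 (interior_maximal (hVA α) (hVo α) h)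
  by_cases ha : ∃ᶠ i : ℕ in atTop, κ ≤ dens O x ((1 / 2) ^ i)
  · by_cases hb : ∃ᶠ i : ℕ in atTop, dens O x ((1 / 2) ^ i) ≤ 1 - κ
    · exact Or.inl (Or.inl ⟨ha, hb⟩)
    · refine Or.inl (Or.inr ⟨fun α => ?_, ?_⟩)
      · filter_upwards [smooth_dens (hsm α).1 (hxV α)] with i hi
        linarith
      · rw [not_frequently] at hb
        exact hb.mono fun i hi => not_le.1 hi
  · rw [not_frequently] at ha
    exact Or.inr ⟨ha.mono fun i hi => (not_le.1 hi).le, hxe⟩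

end
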